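/- There is no algorithm for the equivalence problem of regular graph constraints over the class of heaps: encoding finite graphs (graphs whose node set is Fin n for some n) as natural numbers via a standard encoding, the set of pairs of graphs ⟨G1, G2⟩ such that G1 ≈_H G2 is not a computable (decidable) set, where H is the class of all heaps. -/

import Mathlib

universe u v w

/-- A (pre)graph: a node set `V` inside an ambient type, two edge relations
`s1` and `s2`, and distinguished constants `null` and `root`. -/
structure PreGraph (α : Type u) where
  V : Set α
  s1 : α → α → Prop
  s2 : α → α → Prop
  null : α
  root : α

namespace PreGraph

/-- `G` is a graph: `V` is finite, `root` and `null` are distinct nodes of `V`,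
edges lie within `V`, and `⟨null, x⟩ ∈ sᵢ` iff `x = null`. -/
def IsGraph {α : Type u} (G : PreGraph α) : Prop :=
  G.V.Finite ∧
  G.null ∈ G.V ∧ G.root ∈ G.V ∧ G.root ≠ G.null ∧
  (∀ x y, G.s1 x y → x ∈ G.V ∧ y ∈ G.V) ∧
  (∀ x y, G.s2 x y → x ∈ G.V ∧ y ∈ G.V) ∧
  (∀ x, G.s1 G.null x ↔ x = G.null) ∧
  (∀ x, G.s2 G.null x ↔ x = G.null)

/-- `h` is a homomorphism from `G` to `G'`. -/
def IsHom {α : Type u} {β : Type v} (G : PreGraph α) (G' : PreGraph β) (h : α → β) : Prop :=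
  (∀ x ∈ G.V, h x ∈ G'.V) ∧
  (∀ x y, G.s1 x y → G'.s1 (h x) (h y)) ∧
  (∀ x y, G.s2 x y → G'.s2 (h x) (h y)) ∧
  (∀ x ∈ G.V, (h x = G'.root ↔ x = G.root)) ∧
  (∀ x ∈ G.V, (h x = G'.null ↔ x = G.null))

/-- `G → G'` : there exists a homomorphism from `G` to `G'`. -/
def Maps {α : Type u} {β : Type v} (G : PreGraph α) (G' : PreGraph β) : Prop :=
  ∃ h : α → β, IsHom G G' h

/-- An edge of `G` (either an `s1`- or an `s2`-edge). -/
def edge {α : Type u} (G : PreGraph α) (x y : α) : Prop := G.s1 x y ∨ G.s2 x y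

/-- `G` is a heap: a graph in which `s1` and `s2` are total functions on `V`
and every node other than `null` is reachable from `root`. -/
def IsHeap {α : Type u} (G : PreGraph α) : Prop :=
  IsGraph G ∧
  (∀ x ∈ G.V, ∃! y, G.s1 x y) ∧
  (∀ x ∈ G.V, ∃! y, G.s2 x y) ∧
  (∀ x ∈ G.V, x ≠ G.null → Relation.ReflTransGen G.edge G.root x)

end PreGraph

/-- `G1 ≈_H G2` : equivalence over the class of all heaps. -/
def HeapEquiv {α : Type u} {β : Type v} (G1 : PreGraph α) (G2 : PreGraph β) : Prop :=
  ∀ (γ : Type) (H : PreGraph γ), PreGraph.IsHeap H →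
    (PreGraph.Maps H G1 ↔ PreGraph.Maps H G2)

/-- A finite graph whose node set is `Fin n`, with concrete (`Bool`-valued)
edge relations, so that it can be encoded as a natural number. -/
structure FinGraph where
  n : ℕ
  s1 : Fin n → Fin n → Bool
  s2 : Fin n → Fin n → Bool
  null : Fin n
  root : Fin n
  root_ne_null : root ≠ null
  null_s1 : ∀ x, s1 null x = true ↔ x = null
  null_s2 : ∀ x, s2 null x = true ↔ x = null

/-- The graph (with node set `Fin n`) determined by a `FinGraph`. -/
def FinGraph.toPreGraph (G : FinGraph) : PreGraph (Fin G.n) where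
  V := Set.univ
  s1 := fun x y => G.s1 x y = true
  s2 := fun x y => G.s2 x y = true
  null := G.null
  root := G.root

/-- The data `⟨n, s1, s2, null, root⟩` of a finite graph. -/
abbrev GraphData : Type :=
  Σ n : ℕ, (Fin n → Fin n → Bool) × (Fin n → Fin n → Bool) × Fin n × Fin n

/-- A standard encoding of finite graphs as natural numbers, via the standard
encoding of the data `⟨n, s1, s2, null, root⟩`. -/
def FinGraph.encode (G : FinGraph) : ℕ :=
  Encodable.encode (⟨G.n, G.s1, G.s2, G.null, G.root⟩ : GraphData)

/-- A standard encoding of pairs of finite graphs as natural numbers. -/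
def encodePair (G1 G2 : FinGraph) : ℕ := Nat.pair G1.encode G2.encode

/-!
Heaps with a homomorphism to a suitable finite graph are the heaps whose inner nodes can be coloured
subject to local constraints along `s1` and `s2`. Let `G` express, in this sense, that a rectangular
grid is coloured by a halting computation of a machine `M`, one configuration per row, and let `G'`
express the same constraints together with those of a second colouring, which exhibits a defect:
an infinite path, a node where going right and up is not going up and right, or a node whose right
and upper neighbours exist but have no common neighbour. A heap that maps to `G` has no defect
colouring exactly when it receives a homomorphism from a rectangular grid, and homomorphisms can be
composed, so `G` and `G'` differ over heaps if and only if some grid carries a halting computation.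
Hence `G ≈_H G'` if and only if `M` does not halt, and the codes of `G` and `G'` are primitive
recursive in the input of `M`.
-/

namespace PreGraph

variable {α β γ : Type*}

theorem Maps.trans {G : PreGraph α} {G' : PreGraph β} {G'' : PreGraph γ}
    (h : Maps G G') (h' : Maps G' G'') : Maps G G'' := by
  obtain ⟨f, fV, f1, f2, froot, fnull⟩ := h
  obtain ⟨g, gV, g1, g2, groot, gnull⟩ := h'
  exact ⟨g ∘ f, fun x hx => gV _ (fV x hx), fun x y hxy => g1 _ _ (f1 x y hxy),
    fun x y hxy => g2 _ _ (f2 x y hxy), fun x hx => (groot _ (fV x hx)).trans (froot x hx),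
    fun x hx => (gnull _ (fV x hx)).trans (fnull x hx)⟩

/-- The inner nodes of a graph: those other than `root` and `null`. -/
def IsInner (H : PreGraph γ) (x : γ) : Prop := x ∈ H.V ∧ x ≠ H.root ∧ x ≠ H.null

theorem eq_null_or_eq_root_or_isInner {H : PreGraph γ} {x : γ} (hx : x ∈ H.V) :
    x = H.null ∨ x = H.root ∨ H.IsInner x := by
  unfold IsInner
  tauto

/-- The normalisation of the root that every heap mapping to one of our graphs satisfies:
the root only serves to point, along `s1`, at the node where the pattern starts. -/
structure IsRooted (H : PreGraph γ) : Prop where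
  s2_root_null : H.s2 H.root H.null
  not_s1_root_null : ¬ H.s1 H.root H.null
  not_s1_root : ∀ x, ¬ H.s1 x H.root
  not_s2_root : ∀ x, ¬ H.s2 x H.root

theorem IsRooted.isInner_of_s1_root {H : PreGraph γ} (hroot : H.IsRooted) (hH : H.IsGraph)
    {x : γ} (hx : H.s1 H.root x) : H.IsInner x :=
  ⟨(hH.2.2.2.2.1 _ _ hx).2, fun h => hroot.not_s1_root _ (h ▸ hx),
    fun h => hroot.not_s1_root_null (h ▸ hx)⟩

end PreGraph

/-- A system of local constraints on colourings of rectangular grids by elements of `C`.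
The relations `right` and `up` constrain horizontally and vertically adjacent cells, `start` the
corner at the origin, `rightEnd` and `upEnd` the last column and the last row. -/
structure GridPattern (C : Type*) where
  admissible : C → Prop
  start : C → Prop
  right : C → C → Prop
  rightEnd : C → Prop
  up : C → C → Prop
  upEnd : C → Prop

namespace GridPattern

variable {C D γ : Type*}

/-- `τ` colours the rectangle `[0, w] × [0, N]` according to the pattern `P`. -/
structure Tiling (P : GridPattern C) (w N : ℕ) (τ : ℕ → ℕ → C) : Prop where
  admissible : ∀ i ≤ w, ∀ j ≤ N, P.admissible (τ i j)
  start : P.start (τ 0 0)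
  right : ∀ i < w, ∀ j ≤ N, P.right (τ i j) (τ (i + 1) j)
  rightEnd : ∀ j ≤ N, P.rightEnd (τ w j)
  up : ∀ i ≤ w, ∀ j < N, P.up (τ i j) (τ i (j + 1))
  upEnd : ∀ i ≤ w, P.upEnd (τ i N)

/-- `e` colours the inner nodes of the graph `H` according to the pattern `P`, where `s1` and `s2`
lead one cell to the right and one cell up, and edges to `null` leave the grid. -/
structure Coloring (P : GridPattern C) (H : PreGraph γ) (e : γ → C) : Prop where
  admissible : ∀ x, H.IsInner x → P.admissible (e x)
  start : ∀ x, H.s1 H.root x → P.start (e x)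
  right : ∀ x y, H.IsInner x → H.IsInner y → H.s1 x y → P.right (e x) (e y)
  rightEnd : ∀ x, H.IsInner x → H.s1 x H.null → P.rightEnd (e x)
  up : ∀ x y, H.IsInner x → H.IsInner y → H.s2 x y → P.up (e x) (e y)
  upEnd : ∀ x, H.IsInner x → H.s2 x H.null → P.upEnd (e x)

/-- The conjunction of two patterns, on pairs of colours. -/
protected def prod (P : GridPattern C) (Q : GridPattern D) : GridPattern (C × D) where
  admissible c := P.admissible c.1 ∧ Q.admissible c.2
  start c := P.start c.1 ∧ Q.start c.2
  right c c' := P.right c.1 c'.1 ∧ Q.right c.2 c'.2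
  rightEnd c := P.rightEnd c.1 ∧ Q.rightEnd c.2
  up c c' := P.up c.1 c'.1 ∧ Q.up c.2 c'.2
  upEnd c := P.upEnd c.1 ∧ Q.upEnd c.2

theorem exists_coloring_prod_iff {P : GridPattern C} {Q : GridPattern D} {H : PreGraph γ} :
    (∃ e, (P.prod Q).Coloring H e) ↔ (∃ e, P.Coloring H e) ∧ ∃ e, Q.Coloring H e := by
  constructor
  · rintro ⟨e, he⟩
    refine ⟨⟨Prod.fst ∘ e, ?_⟩, ⟨Prod.snd ∘ e, ?_⟩⟩
    · exact ⟨fun x hx => (he.admissible x hx).1, fun x hx => (he.start x hx).1,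
        fun x y hx hy h => (he.right x y hx hy h).1, fun x hx h => (he.rightEnd x hx h).1,
        fun x y hx hy h => (he.up x y hx hy h).1, fun x hx h => (he.upEnd x hx h).1⟩
    · exact ⟨fun x hx => (he.admissible x hx).2, fun x hx => (he.start x hx).2,
        fun x y hx hy h => (he.right x y hx hy h).2, fun x hx h => (he.rightEnd x hx h).2,
        fun x y hx hy h => (he.up x y hx hy h).2, fun x hx h => (he.upEnd x hx h).2⟩
  · rintro ⟨⟨e, he⟩, e', he'⟩
    exact ⟨fun x => (e x, e' x), fun x hx => ⟨he.admissible x hx, he'.admissible x hx⟩,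
      fun x hx => ⟨he.start x hx, he'.start x hx⟩,
      fun x y hx hy h => ⟨he.right x y hx hy h, he'.right x y hx hy h⟩,
      fun x hx h => ⟨he.rightEnd x hx h, he'.rightEnd x hx h⟩,
      fun x y hx hy h => ⟨he.up x y hx hy h, he'.up x y hx hy h⟩,
      fun x hx h => ⟨he.upEnd x hx h, he'.upEnd x hx h⟩⟩

/-- The finite graph `G` expresses the pattern `P`: the heaps mapping to `G` are the rooted heaps
that have a `P`-colouring. -/
def Realizes (G : FinGraph) (P : GridPattern C) : Prop :=
  ∀ (γ : Type) (H : PreGraph γ), H.IsHeap →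
    (H.Maps G.toPreGraph ↔ H.IsRooted ∧ ∃ e, P.Coloring H e)

end GridPattern

/-- The nodes of the heaps `gridHeap w N`. -/
inductive GridNode
  | null
  | root
  | cell (i j : ℕ)

namespace GridNode

/-- The nodes that lie in the rectangle `[0, w] × [0, N]`, together with `null` and `root`. -/
def IsIn (w N : ℕ) : GridNode → Prop
  | cell i j => i ≤ w ∧ j ≤ N
  | _ => True

/-- The `s1`-successor of a node in a grid whose last column is the `w`-th. -/
def right (w : ℕ) : GridNode → GridNode
  | null => null
  | root => cell 0 0
  | cell i j => if i < w then cell (i + 1) j else null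

/-- The `s2`-successor of a node in a grid whose last row is the `N`-th. -/
def up (N : ℕ) : GridNode → GridNode
  | null => null
  | root => null
  | cell i j => if j < N then cell i (j + 1) else null

variable {w N : ℕ}

theorem right_cell_of_lt {i : ℕ} (hi : i < w) (j : ℕ) : right w (cell i j) = cell (i + 1) j :=
  if_pos hi

theorem right_cell_self (j : ℕ) : right w (cell w j) = null :=
  if_neg (lt_irrefl w)

theorem up_cell_of_lt {j : ℕ} (i : ℕ) (hj : j < N) : up N (cell i j) = cell i (j + 1) :=
  if_pos hj

theorem up_cell_self (i : ℕ) : up N (cell i N) = null :=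
  if_neg (lt_irrefl N)

theorem IsIn.right {x : GridNode} (hx : x.IsIn w N) : (x.right w).IsIn w N := by
  rcases x with _ | _ | ⟨i, j⟩
  · trivial
  · exact ⟨zero_le, zero_le⟩
  · simp only [GridNode.right]
    split_ifs with h
    exacts [⟨h, hx.2⟩, trivial]

theorem IsIn.up {x : GridNode} (hx : x.IsIn w N) : (x.up N).IsIn w N := by
  rcases x with _ | _ | ⟨i, j⟩
  · trivial
  · trivial
  · simp only [GridNode.up]
    split_ifs with h
    exacts [⟨hx.1, h⟩, trivial]

theorem right_ne_root (x : GridNode) : x.right w ≠ root := by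
  rcases x with _ | _ | ⟨i, j⟩
  · nofun
  · nofun
  · simp only [right]
    split_ifs <;> nofun

theorem up_ne_root (x : GridNode) : x.up N ≠ root := by
  rcases x with _ | _ | ⟨i, j⟩
  · nofun
  · nofun
  · simp only [up]
    split_ifs <;> nofun

theorem finite_setOf_isIn (w N : ℕ) : {x : GridNode | x.IsIn w N}.Finite := by
  refine (((Set.finite_Iic w).prod (Set.finite_Iic N)).image
    (fun p => cell p.1 p.2) |>.union (Set.toFinite {null, root})).subset ?_
  rintro (_ | _ | ⟨i, j⟩) hx
  · exact Or.inr (Or.inl rfl)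
  · exact Or.inr (Or.inr rfl)
  · exact Or.inl ⟨(i, j), hx, rfl⟩

end GridNode

/-- The heap whose inner nodes are the cells of the rectangle `[0, w] × [0, N]`. -/
def gridHeap (w N : ℕ) : PreGraph GridNode where
  V := {x | x.IsIn w N}
  s1 x y := x.IsIn w N ∧ y = x.right w
  s2 x y := x.IsIn w N ∧ y = x.up N
  null := .null
  root := .root

section GridHeap

open GridNode

variable {w N : ℕ}

theorem reflTransGen_edge_gridHeap_cell {i j : ℕ} (hi : i ≤ w) (hj : j ≤ N) :
    Relation.ReflTransGen (gridHeap w N).edge root (cell i j) := by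
  induction i with
  | zero =>
    induction j with
    | zero => exact .single (Or.inl ⟨trivial, rfl⟩)
    | succ j ih =>
      exact (ih (by omega)).tail (Or.inr ⟨⟨zero_le, by omega⟩, (up_cell_of_lt _ hj).symm⟩)
  | succ i ih =>
    exact (ih (by omega)).tail (Or.inl ⟨⟨by omega, hj⟩, (right_cell_of_lt hi _).symm⟩)

theorem isHeap_gridHeap (w N : ℕ) : (gridHeap w N).IsHeap := by
  refine ⟨⟨finite_setOf_isIn w N, trivial, trivial, nofun, ?_, ?_, ?_, ?_⟩,
    fun x hx => ⟨x.right w, ⟨hx, rfl⟩, fun y hy => hy.2⟩,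
    fun x hx => ⟨x.up N, ⟨hx, rfl⟩, fun y hy => hy.2⟩, ?_⟩
  · rintro x y ⟨hx, rfl⟩
    exact ⟨hx, hx.right⟩
  · rintro x y ⟨hx, rfl⟩
    exact ⟨hx, hx.up⟩
  · exact fun x => and_iff_right trivial
  · exact fun x => and_iff_right trivial
  · rintro (_ | _ | ⟨i, j⟩) hx hnull
    · exact absurd rfl hnull
    · exact .refl
    · exact reflTransGen_edge_gridHeap_cell hx.1 hx.2

theorem isRooted_gridHeap (w N : ℕ) : (gridHeap w N).IsRooted where
  s2_root_null := ⟨trivial, rfl⟩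
  not_s1_root_null h := nomatch h.2
  not_s1_root x h := right_ne_root x h.2.symm
  not_s2_root x h := up_ne_root x h.2.symm

theorem isInner_gridHeap_iff {x : GridNode} :
    (gridHeap w N).IsInner x ↔ ∃ i ≤ w, ∃ j ≤ N, x = cell i j := by
  constructor
  · rcases x with _ | _ | ⟨i, j⟩ <;> rintro ⟨hV, hroot, hnull⟩
    · exact absurd rfl hnull
    · exact absurd rfl hroot
    · exact ⟨i, hV.1, j, hV.2, rfl⟩
  · rintro ⟨i, hi, j, hj, rfl⟩
    exact ⟨⟨hi, hj⟩, nofun, nofun⟩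

namespace GridPattern

variable {C : Type*} {P : GridPattern C}

theorem Coloring.tiling {e : GridNode → C} (he : P.Coloring (gridHeap w N) e) :
    P.Tiling w N fun i j => e (cell i j) := by
  have inner {i j : ℕ} (hi : i ≤ w) (hj : j ≤ N) : (gridHeap w N).IsInner (cell i j) :=
    isInner_gridHeap_iff.2 ⟨i, hi, j, hj, rfl⟩
  exact
    { admissible i hi j hj := he.admissible _ (inner hi hj)
      start := he.start _ ⟨trivial, rfl⟩
      right i hi j hj := he.right _ _ (inner hi.le hj) (inner hi hj)
        ⟨⟨hi.le, hj⟩, (right_cell_of_lt hi j).symm⟩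
      rightEnd j hj := he.rightEnd _ (inner le_rfl hj)
        ⟨⟨le_rfl, hj⟩, (right_cell_self j).symm⟩
      up i hi j hj := he.up _ _ (inner hi hj.le) (inner hi hj)
        ⟨⟨hi, hj.le⟩, (up_cell_of_lt i hj).symm⟩
      upEnd i hi := he.upEnd _ (inner hi le_rfl) ⟨⟨hi, le_rfl⟩, (up_cell_self i).symm⟩ }

theorem Tiling.exists_coloring_gridHeap {τ : ℕ → ℕ → C} (hτ : P.Tiling w N τ) :
    ∃ e, P.Coloring (gridHeap w N) e := by
  let e : GridNode → C
    | cell i j => τ i j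
    | _ => τ 0 0
  refine ⟨e, ?_, ?_, ?_, ?_, ?_, ?_⟩
  · intro x hx
    obtain ⟨i, hi, j, hj, rfl⟩ := isInner_gridHeap_iff.1 hx
    exact hτ.admissible i hi j hj
  · rintro _ ⟨-, rfl⟩
    exact hτ.start
  · rintro x y hx hy ⟨-, hxy⟩
    obtain ⟨i, hi, j, hj, rfl⟩ := isInner_gridHeap_iff.1 hx
    rcases hi.lt_or_eq with hi | rfl
    · rw [hxy, right_cell_of_lt hi]
      exact hτ.right i hi j hj
    · exact absurd (hxy.trans (right_cell_self j)) hy.2.2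
  · rintro x hx ⟨-, hxy⟩
    obtain ⟨i, hi, j, hj, rfl⟩ := isInner_gridHeap_iff.1 hx
    rcases hi.lt_or_eq with hi | rfl
    · exact nomatch hxy.trans (right_cell_of_lt hi j)
    · exact hτ.rightEnd j hj
  · rintro x y hx hy ⟨-, hxy⟩
    obtain ⟨i, hi, j, hj, rfl⟩ := isInner_gridHeap_iff.1 hx
    rcases hj.lt_or_eq with hj | rfl
    · rw [hxy, up_cell_of_lt i hj]
      exact hτ.up i hi j hj
    · exact absurd (hxy.trans (up_cell_self i)) hy.2.2
  · rintro x hx ⟨-, hxy⟩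
    obtain ⟨i, hi, j, hj, rfl⟩ := isInner_gridHeap_iff.1 hx
    rcases hj.lt_or_eq with hj | rfl
    · exact nomatch hxy.trans (up_cell_of_lt i hj)
    · exact hτ.upEnd i hi

end GridPattern

end GridHeap

/-- What a cell of the pattern `defectPattern` claims: that a defect is found by going `right` or
`up`; that the two ways of going one step right and one step up lead to nodes with different labels
(`fork b`, where `b` is the label reached by going right first); that its right and upper neighbours
exist but have no common neighbour (`corner`); or nothing. -/
inductive DefectMode
  | right
  | up
  | fork (b : Bool)
  | corner
  | idle
  deriving Fintype, Inhabited

/-- The colours of `defectPattern`: a claim, labels of the cell and of its neighbours, and whether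
the right neighbour is missing. Missing neighbours have the label `false`. -/
structure DefectColor where
  mode : DefectMode
  label : Bool
  rightLabel : Bool
  upLabel : Bool
  rightNull : Bool
  deriving Fintype, Inhabited

/-- The pattern whose colourings prove that a graph is not a rectangular grid. -/
def defectPattern : GridPattern DefectColor where
  admissible _ := True
  start c := c.mode ≠ .idle
  right c c' := c.rightLabel = c'.label ∧ c.rightNull = false ∧
    (c.mode = .right → c'.mode ≠ .idle) ∧ ∀ b, c.mode = .fork b → c'.upLabel = b
  rightEnd c := c.rightLabel = false ∧ c.rightNull = true ∧
    c.mode ≠ .right ∧ c.mode ≠ .corner ∧ c.mode ≠ .fork true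
  up c c' := c.upLabel = c'.label ∧ (c.mode = .up → c'.mode ≠ .idle) ∧
    (∀ b, c.mode = .fork b → c'.rightLabel = !b) ∧ (c.mode = .corner → c'.rightNull = true)
  upEnd c := c.upLabel = false ∧ c.mode ≠ .up ∧ c.mode ≠ .corner ∧ c.mode ≠ .fork false

section NoTiling

open GridPattern

variable {w N : ℕ} {τ : ℕ → ℕ → DefectColor}

theorem mode_ne_fork_of_tiling_defectPattern (hτ : defectPattern.Tiling w N τ) {i j : ℕ}
    (hi : i ≤ w) (hj : j ≤ N) (b : Bool) : (τ i j).mode ≠ .fork b := by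
  intro hmode
  rcases hi.lt_or_eq with hiw | rfl <;> rcases hj.lt_or_eq with hjN | rfl
  · have hupLabel := (hτ.right i hiw j hj).2.2.2 b hmode
    have hrightLabel := (hτ.up i hi j hjN).2.2.1 b hmode
    have hlabel := (hτ.right i hiw (j + 1) hjN).1
    rw [hrightLabel, ← (hτ.up (i + 1) hiw j hjN).1, hupLabel] at hlabel
    exact Bool.not_ne_self b hlabel
  · have hupLabel := (hτ.right i hiw j hj).2.2.2 b hmode
    obtain rfl : b = false := hupLabel.symm.trans (hτ.upEnd (i + 1) hiw).1
    exact (hτ.upEnd i hi).2.2.2 hmode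
  · have hrightLabel := (hτ.up i hi j hjN).2.2.1 b hmode
    obtain rfl : b = true := by
      simpa using hrightLabel.symm.trans (hτ.rightEnd (j + 1) hjN).1
    exact (hτ.rightEnd j hj).2.2.2.2 hmode
  · cases b
    · exact (hτ.upEnd i hi).2.2.2 hmode
    · exact (hτ.rightEnd j hj).2.2.2.2 hmode

theorem mode_ne_corner_of_tiling_defectPattern (hτ : defectPattern.Tiling w N τ) {i j : ℕ}
    (hi : i ≤ w) (hj : j ≤ N) : (τ i j).mode ≠ .corner := by
  intro hmode
  rcases hj.lt_or_eq with hjN | rfl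
  · have hnull : (τ i (j + 1)).rightNull = true := (hτ.up i hi j hjN).2.2.2 hmode
    rcases hi.lt_or_eq with hiw | rfl
    · exact Bool.false_ne_true ((hτ.right i hiw (j + 1) hjN).2.1.symm.trans hnull)
    · exact (hτ.rightEnd j hj).2.2.2.1 hmode
  · exact (hτ.upEnd i hi).2.2.1 hmode

theorem mode_eq_idle_of_tiling_defectPattern (hτ : defectPattern.Tiling w N τ) {i j : ℕ}
    (hi : i ≤ w) (hj : j ≤ N) : (τ i j).mode = .idle := by
  cases hmode : (τ i j).mode with
  | right =>
    rcases hi.lt_or_eq with hiw | rfl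
    · exact absurd (mode_eq_idle_of_tiling_defectPattern hτ hiw hj)
        ((hτ.right i hiw j hj).2.2.1 hmode)
    · exact absurd hmode (hτ.rightEnd j hj).2.2.1
  | up =>
    rcases hj.lt_or_eq with hjN | rfl
    · exact absurd (mode_eq_idle_of_tiling_defectPattern hτ hi hjN)
        ((hτ.up i hi j hjN).2.1 hmode)
    · exact absurd hmode (hτ.upEnd i hi).2.1
  | fork b => exact absurd hmode (mode_ne_fork_of_tiling_defectPattern hτ hi hj b)
  | corner => exact absurd hmode (mode_ne_corner_of_tiling_defectPattern hτ hi hj)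
  | idle => rfl
termination_by (w - i) + (N - j)

theorem not_tiling_defectPattern : ¬ defectPattern.Tiling w N τ := fun hτ =>
  hτ.start (mode_eq_idle_of_tiling_defectPattern hτ zero_le zero_le)

end NoTiling

section Iterate

open Function Set

variable {γ : Type*} {f f₁ f₂ : γ → γ} {o x : γ} {S : Set γ}

theorem exists_iterate_eq_iff_lt {r : γ → γ → Prop} (hfo : f o = o)
    (hr : ∀ y, f y ≠ o → r (f y) y) (hx : x ≠ o) (hacc : Acc r x) :
    ∃ n, ∀ i, f^[i] x = o ↔ n < i := by
  induction hacc with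
  | intro x _ ih =>
    by_cases hfx : f x = o
    · refine ⟨0, fun i => ?_⟩
      cases i with
      | zero => simpa using hx
      | succ i => simp [iterate_succ_apply, hfx, iterate_fixed hfo]
    · obtain ⟨n, hn⟩ := ih (f x) (hr x hfx) hfx
      refine ⟨n + 1, fun i => ?_⟩
      cases i with
      | zero => simpa using hx
      | succ i => rw [iterate_succ_apply, hn, Nat.add_lt_add_iff_right]

theorem apply_iterate_eq_iterate_apply (h₁ : MapsTo f₁ S S)
    (hcomm : ∀ y ∈ S, f₂ (f₁ y) = f₁ (f₂ y)) (hx : x ∈ S) (i : ℕ) :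
    f₂ (f₁^[i] x) = f₁^[i] (f₂ x) := by
  induction i with
  | zero => rfl
  | succ i ih =>
    rw [iterate_succ_apply', iterate_succ_apply', hcomm _ (h₁.iterate i hx), ih]

theorem iterate_apply_eq_iff (h₁ : MapsTo f₁ S S) (hf₁ : f₁ o = o) (hf₂ : f₂ o = o)
    (hcomm : ∀ y ∈ S, f₂ (f₁ y) = f₁ (f₂ y))
    (hcorner : ∀ y ∈ S, f₁ y ≠ o → f₂ y ≠ o → f₁ (f₂ y) ≠ o)
    (hx : x ∈ S) (hfx : f₂ x ≠ o) (i : ℕ) : f₁^[i] (f₂ x) = o ↔ f₁^[i] x = o := by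
  refine ⟨not_imp_not.1 fun hi => ?_, fun hi => ?_⟩
  · induction i with
    | zero => exact hfx
    | succ i ih =>
      rw [iterate_succ_apply'] at hi ⊢
      have hi' : f₁^[i] x ≠ o := fun h => hi (by rw [h, hf₁])
      rw [← apply_iterate_eq_iterate_apply h₁ hcomm hx] at ih ⊢
      exact hcorner _ (h₁.iterate i hx) hi (ih hi')
  · rw [← apply_iterate_eq_iterate_apply h₁ hcomm hx, hi, hf₂]

theorem exists_iterate_iterate_eq_iff {r : γ → γ → Prop} (hr₁ : ∀ y, f₁ y ≠ o → r (f₁ y) y)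
    (hr₂ : ∀ y, f₂ y ≠ o → r (f₂ y) y) (h₁ : MapsTo f₁ S S) (h₂ : MapsTo f₂ S S)
    (hf₁ : f₁ o = o) (hf₂ : f₂ o = o) (hcomm : ∀ y ∈ S, f₂ (f₁ y) = f₁ (f₂ y))
    (hcorner : ∀ y ∈ S, f₁ y ≠ o → f₂ y ≠ o → f₁ (f₂ y) ≠ o)
    (hxS : x ∈ S) (hx : x ≠ o) (hacc : Acc r x) :
    ∃ w N, ∀ i j, f₁^[i] (f₂^[j] x) = o ↔ w < i ∨ N < j := by
  obtain ⟨w, hw⟩ := exists_iterate_eq_iff_lt hf₁ hr₁ hx hacc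
  obtain ⟨N, hN⟩ := exists_iterate_eq_iff_lt hf₂ hr₂ hx hacc
  refine ⟨w, N, fun i j => ?_⟩
  rcases lt_or_ge N j with hj | hj
  · simp [(hN j).2 hj, iterate_fixed hf₁, hj]
  · rw [or_iff_left hj.not_gt]
    induction j with
    | zero => exact hw i
    | succ j ih =>
      have hfj : f₂ (f₂^[j] x) ≠ o := by
        rw [← iterate_succ_apply' f₂, Ne, hN]
        exact hj.not_gt
      rw [iterate_succ_apply', iterate_apply_eq_iff h₁ hf₁ hf₂ hcomm hcorner
        (h₂.iterate j hxS) hfj, ih (by omega)]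

end Iterate

namespace PreGraph

variable {γ : Type*} {H : PreGraph γ} {f₁ f₂ : γ → γ}

/-- `f₁` and `f₂` are the functions whose graphs, over the nodes of `H`, are `s1` and `s2`. -/
structure IsSucc (H : PreGraph γ) (f₁ f₂ : γ → γ) : Prop where
  s1_iff : ∀ {x y}, H.s1 x y ↔ x ∈ H.V ∧ y = f₁ x
  s2_iff : ∀ {x y}, H.s2 x y ↔ x ∈ H.V ∧ y = f₂ x

theorem IsHeap.exists_isSucc (hH : H.IsHeap) : ∃ f₁ f₂, H.IsSucc f₁ f₂ := by
  have graph_of_total {s : γ → γ → Prop} (hV : ∀ x y, s x y → x ∈ H.V)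
      (hs : ∀ x ∈ H.V, ∃! y, s x y) : ∃ f : γ → γ, ∀ {x y}, s x y ↔ x ∈ H.V ∧ y = f x := by
    classical
    refine ⟨fun x => if hx : x ∈ H.V then (hs x hx).choose else x, fun {x y} => ?_⟩
    by_cases hx : x ∈ H.V
    · simp only [hx, true_and, dif_pos]
      exact ⟨fun h => (hs x hx).choose_spec.2 y h, fun h => h ▸ (hs x hx).choose_spec.1⟩
    · exact iff_of_false (fun h => hx (hV x y h)) fun h => hx h.1
  obtain ⟨f₁, hf₁⟩ := graph_of_total (fun x y h => (hH.1.2.2.2.2.1 x y h).1) hH.2.1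
  obtain ⟨f₂, hf₂⟩ := graph_of_total (fun x y h => (hH.1.2.2.2.2.2.1 x y h).1) hH.2.2.1
  exact ⟨f₁, f₂, hf₁, hf₂⟩

theorem IsSucc.apply_null (hf : H.IsSucc f₁ f₂) (hH : H.IsGraph) :
    f₁ H.null = H.null ∧ f₂ H.null = H.null := by
  obtain ⟨-, -, -, -, -, -, h₁, h₂⟩ := hH
  exact ⟨(hf.s1_iff.1 ((h₁ _).2 rfl)).2.symm, (hf.s2_iff.1 ((h₂ _).2 rfl)).2.symm⟩

theorem IsSucc.s1_apply (hf : H.IsSucc f₁ f₂) {x : γ} (hx : x ∈ H.V) : H.s1 x (f₁ x) :=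
  hf.s1_iff.2 ⟨hx, rfl⟩

theorem IsSucc.s2_apply (hf : H.IsSucc f₁ f₂) {x : γ} (hx : x ∈ H.V) : H.s2 x (f₂ x) :=
  hf.s2_iff.2 ⟨hx, rfl⟩

theorem IsSucc.isInner_apply_root (hf : H.IsSucc f₁ f₂) (hH : H.IsGraph) (hroot : H.IsRooted) :
    H.IsInner (f₁ H.root) :=
  hroot.isInner_of_s1_root hH (hf.s1_apply hH.2.2.1)

theorem IsSucc.mapsTo (hf : H.IsSucc f₁ f₂) (hH : H.IsGraph) (hroot : H.IsRooted) :
    Set.MapsTo f₁ (H.V \ {H.root}) (H.V \ {H.root}) ∧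
      Set.MapsTo f₂ (H.V \ {H.root}) (H.V \ {H.root}) := by
  obtain ⟨-, -, -, -, hV₁, hV₂, -, -⟩ := hH
  exact ⟨fun x hx => ⟨(hV₁ _ _ (hf.s1_apply hx.1)).2,
      fun h => hroot.not_s1_root x (h ▸ hf.s1_apply hx.1)⟩,
    fun x hx => ⟨(hV₂ _ _ (hf.s2_apply hx.1)).2,
      fun h => hroot.not_s2_root x (h ▸ hf.s2_apply hx.1)⟩⟩

/-- One step along a successor function, not to the sentinel node `o`. -/
def Step (f₁ f₂ : γ → γ) (o x y : γ) : Prop := (y = f₁ x ∨ y = f₂ x) ∧ y ≠ o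

end PreGraph

/-- The claim of a cell `x` holds, where `o` is the null node, `A` is the set of nodes from which a
defect is to be found, and `lab` is the labelling. -/
def DefectMode.HoldsAt {γ : Type*} (f₁ f₂ : γ → γ) (o : γ) (A : γ → Prop) (lab : γ → Bool)
    (x : γ) : DefectMode → Prop
  | .right => A (f₁ x) ∧ f₁ x ≠ o
  | .up => A (f₂ x) ∧ f₂ x ≠ o
  | .fork b => lab (f₂ (f₁ x)) = b ∧ lab (f₁ (f₂ x)) = !b
  | .corner => f₁ x ≠ o ∧ f₂ x ≠ o ∧ f₁ (f₂ x) = o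
  | .idle => ¬ A x

namespace PreGraph

variable {γ : Type*} {H : PreGraph γ} {f₁ f₂ : γ → γ}

theorem exists_coloring_defectPattern (hH : H.IsGraph) (hf : H.IsSucc f₁ f₂) {A : γ → Prop}
    {lab : γ → Bool} (hlab : lab H.null = false) (hA : A (f₁ H.root))
    (hmode : ∀ x, ∃ m : DefectMode, m.HoldsAt f₁ f₂ H.null A lab x) :
    ∃ e, defectPattern.Coloring H e := by
  classical
  obtain ⟨hnull₁, hnull₂⟩ := hf.apply_null hH
  choose m hm using hmode
  have hm_of_eq {x : γ} {k : DefectMode} (h : m x = k) : k.HoldsAt f₁ f₂ H.null A lab x := h ▸ hm x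
  have ne_idle {x : γ} (hx : A x) : m x ≠ .idle := fun h => hm_of_eq h hx
  refine ⟨fun x => ⟨m x, lab x, lab (f₁ x), lab (f₂ x), decide (f₁ x = H.null)⟩,
    fun _ _ => trivial, ?_, ?_, ?_, ?_, ?_⟩
  · intro x hx
    rw [(hf.s1_iff.1 hx).2]
    exact ne_idle hA
  · intro x y _ hy hxy
    obtain ⟨-, rfl⟩ := hf.s1_iff.1 hxy
    exact ⟨rfl, decide_eq_false hy.2.2, fun h => ne_idle (hm_of_eq h).1, fun b h => (hm_of_eq h).1⟩
  · intro x _ hx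
    have hx₁ : f₁ x = H.null := (hf.s1_iff.1 hx).2.symm
    refine ⟨by simp only [hx₁, hlab], by simp only [hx₁, decide_true],
      fun h => (hm_of_eq h).2 hx₁, fun h => (hm_of_eq h).1 hx₁, fun h => ?_⟩
    have hfork := (hm_of_eq h).1
    rw [hx₁, hnull₂, hlab] at hfork
    exact Bool.false_ne_true hfork
  · intro x y _ _ hxy
    obtain ⟨-, rfl⟩ := hf.s2_iff.1 hxy
    exact ⟨rfl, fun h => ne_idle (hm_of_eq h).1, fun b h => (hm_of_eq h).2,
      fun h => decide_eq_true (hm_of_eq h).2.2⟩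
  · intro x _ hx
    have hx₂ : f₂ x = H.null := (hf.s2_iff.1 hx).2.symm
    refine ⟨by simp only [hx₂, hlab], fun h => (hm_of_eq h).2 hx₂,
      fun h => (hm_of_eq h).2.1 hx₂, fun h => ?_⟩
    have hfork := (hm_of_eq h).2
    rw [hx₂, hnull₁, hlab] at hfork
    exact Bool.false_ne_true hfork

theorem exists_holdsAt_of_step {A : γ → Prop} {lab : γ → Bool} {o x y : γ}
    (hxy : Step f₁ f₂ o x y) (hy : A y) : ∃ m : DefectMode, m.HoldsAt f₁ f₂ o A lab x := by
  obtain ⟨rfl | rfl, hnull⟩ := hxy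
  exacts [⟨.right, hy, hnull⟩, ⟨.up, hy, hnull⟩]

theorem exists_coloring_defectPattern_of_not_acc (hH : H.IsGraph) (hf : H.IsSucc f₁ f₂)
    (hacc : ¬ Acc (flip (Step f₁ f₂ H.null)) (f₁ H.root)) :
    ∃ e, defectPattern.Coloring H e := by
  refine exists_coloring_defectPattern hH hf (lab := fun _ => false)
    (A := fun x => ¬ Acc (flip (Step f₁ f₂ H.null)) x) rfl hacc fun x => ?_
  by_cases hx : Acc (flip (Step f₁ f₂ H.null)) x
  · exact ⟨.idle, not_not.2 hx⟩
  · obtain ⟨y, hxy, hy⟩ : ∃ y, Step f₁ f₂ H.null x y ∧ ¬ Acc (flip (Step f₁ f₂ H.null)) y := by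
      by_contra! h
      exact hx ⟨_, h⟩
    exact exists_holdsAt_of_step hxy hy

theorem exists_coloring_defectPattern_of_reaches (hH : H.IsGraph) (hf : H.IsSucc f₁ f₂) {x : γ}
    (hx : Relation.ReflTransGen (Step f₁ f₂ H.null) (f₁ H.root) x) {lab : γ → Bool}
    (hlab : lab H.null = false)
    (hmode : ∀ A : γ → Prop, ∃ m : DefectMode, m.HoldsAt f₁ f₂ H.null A lab x) :
    ∃ e, defectPattern.Coloring H e := by
  refine exists_coloring_defectPattern hH hf
    (A := fun y => Relation.ReflTransGen (Step f₁ f₂ H.null) y x) hlab hx fun y => ?_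
  by_cases hy : Relation.ReflTransGen (Step f₁ f₂ H.null) y x
  · rcases hy.cases_head with rfl | ⟨z, hyz, hz⟩
    · exact hmode _
    · exact exists_holdsAt_of_step hyz hz
  · exact ⟨.idle, hy⟩

theorem exists_bool_labelling_ne {o x y : γ} (hxy : x ≠ y) :
    ∃ lab : γ → Bool, lab o = false ∧ lab x = !lab y := by
  classical
  by_cases hx : x = o
  · exact ⟨fun z => decide (z = y), by simp [← hx, hxy], by simp [hxy]⟩
  · exact ⟨fun z => decide (z = x), by simp [Ne.symm hx], by simp [hxy.symm]⟩

theorem comm_of_not_exists_coloring_defectPattern (hH : H.IsGraph) (hf : H.IsSucc f₁ f₂)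
    (hdefect : ¬ ∃ e, defectPattern.Coloring H e) {x : γ}
    (hx : Relation.ReflTransGen (Step f₁ f₂ H.null) (f₁ H.root) x) : f₂ (f₁ x) = f₁ (f₂ x) := by
  by_contra hne
  obtain ⟨lab, hlab, hfork⟩ := exists_bool_labelling_ne (o := H.null) (Ne.symm hne)
  exact hdefect (exists_coloring_defectPattern_of_reaches hH hf hx hlab
    fun _ => ⟨.fork (lab (f₂ (f₁ x))), rfl, hfork⟩)

theorem apply_apply_ne_null_of_not_exists_coloring_defectPattern (hH : H.IsGraph)
    (hf : H.IsSucc f₁ f₂) (hdefect : ¬ ∃ e, defectPattern.Coloring H e) {x : γ}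
    (hx : Relation.ReflTransGen (Step f₁ f₂ H.null) (f₁ H.root) x)
    (hx₁ : f₁ x ≠ H.null) (hx₂ : f₂ x ≠ H.null) : f₁ (f₂ x) ≠ H.null := fun h =>
  hdefect (exists_coloring_defectPattern_of_reaches hH hf hx (lab := fun _ => false) rfl
    fun _ => ⟨.corner, hx₁, hx₂, h⟩)

theorem maps_gridHeap (hH : H.IsGraph) (hroot : H.s2 H.root H.null) {w N : ℕ} {g : ℕ → ℕ → γ}
    (hinner : ∀ i ≤ w, ∀ j ≤ N, H.IsInner (g i j)) (hstart : H.s1 H.root (g 0 0))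
    (hright : ∀ i < w, ∀ j ≤ N, H.s1 (g i j) (g (i + 1) j))
    (hrightEnd : ∀ j ≤ N, H.s1 (g w j) H.null)
    (hup : ∀ i ≤ w, ∀ j < N, H.s2 (g i j) (g i (j + 1)))
    (hupEnd : ∀ i ≤ w, H.s2 (g i N) H.null) : (gridHeap w N).Maps H := by
  obtain ⟨-, hnullV, hrootV, hroot_ne, -, -, hnull₁, hnull₂⟩ := hH
  let h : GridNode → γ
    | .null => H.null
    | .root => H.root
    | .cell i j => g i j
  refine ⟨h, ?_, ?_, ?_, ?_, ?_⟩
  · rintro (_ | _ | ⟨i, j⟩) hx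
    exacts [hnullV, hrootV, (hinner i hx.1 j hx.2).1]
  · rintro (_ | _ | ⟨i, j⟩) _ ⟨hx, rfl⟩
    · exact (hnull₁ _).2 rfl
    · exact hstart
    · rcases hx.1.lt_or_eq with hi | rfl
      · rw [GridNode.right_cell_of_lt hi]
        exact hright i hi j hx.2
      · rw [GridNode.right_cell_self]
        exact hrightEnd j hx.2
  · rintro (_ | _ | ⟨i, j⟩) _ ⟨hx, rfl⟩
    · exact (hnull₂ _).2 rfl
    · exact hroot
    · rcases hx.2.lt_or_eq with hj | rfl
      · rw [GridNode.up_cell_of_lt i hj]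
        exact hup i hx.1 j hj
      · rw [GridNode.up_cell_self]
        exact hupEnd i hx.1
  · rintro (_ | _ | ⟨i, j⟩) hx
    exacts [iff_of_false hroot_ne.symm nofun, iff_of_true rfl rfl,
      iff_of_false (hinner i hx.1 j hx.2).2.1 nofun]
  · rintro (_ | _ | ⟨i, j⟩) hx
    exacts [iff_of_true rfl rfl, iff_of_false hroot_ne nofun,
      iff_of_false (hinner i hx.1 j hx.2).2.2 nofun]

theorem IsSucc.maps_gridHeap (hf : H.IsSucc f₁ f₂) (hH : H.IsGraph) (hroot : H.IsRooted) {w N : ℕ}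
    (hnull : ∀ i j, f₁^[i] (f₂^[j] (f₁ H.root)) = H.null ↔ w < i ∨ N < j)
    (hcomm : ∀ i j, f₂ (f₁^[i] (f₂^[j] (f₁ H.root))) = f₁^[i] (f₂^[j + 1] (f₁ H.root))) :
    (gridHeap w N).Maps H := by
  have hstart := hf.isInner_apply_root hH hroot
  obtain ⟨hmaps₁, hmaps₂⟩ := hf.mapsTo hH hroot
  have hcell (i j : ℕ) : f₁^[i] (f₂^[j] (f₁ H.root)) ∈ H.V \ {H.root} :=
    hmaps₁.iterate i (hmaps₂.iterate j ⟨hstart.1, hstart.2.1⟩)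
  have hright (i j : ℕ) :
      H.s1 (f₁^[i] (f₂^[j] (f₁ H.root))) (f₁^[i + 1] (f₂^[j] (f₁ H.root))) :=
    hf.s1_iff.2 ⟨(hcell i j).1, Function.iterate_succ_apply' ..⟩
  have hup (i j : ℕ) :
      H.s2 (f₁^[i] (f₂^[j] (f₁ H.root))) (f₁^[i] (f₂^[j + 1] (f₁ H.root))) :=
    hf.s2_iff.2 ⟨(hcell i j).1, (hcomm i j).symm⟩
  refine PreGraph.maps_gridHeap hH hroot.s2_root_null (fun i hi j hj => ?_)
    (hf.s1_apply hH.2.2.1) (fun i _ j _ => hright i j) (fun j _ => ?_) (fun i _ j _ => hup i j)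
    fun i _ => ?_
  · exact ⟨(hcell i j).1, (hcell i j).2, by simp [hnull, hi, hj]⟩
  · exact (hnull _ _).2 (Or.inl w.lt_succ_self) ▸ hright w j
  · exact (hnull _ _).2 (Or.inr N.lt_succ_self) ▸ hup i N

theorem exists_maps_gridHeap_of_not_exists_coloring_defectPattern (hH : H.IsHeap)
    (hroot : H.IsRooted) (hdefect : ¬ ∃ e, defectPattern.Coloring H e) :
    ∃ w N, (gridHeap w N).Maps H := by
  obtain ⟨f₁, f₂, hf⟩ := hH.exists_isSucc
  obtain ⟨hnull₁, hnull₂⟩ := hf.apply_null hH.1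
  have hstart := hf.isInner_apply_root hH.1 hroot
  let S : Set γ := {x | x = H.null ∨ Relation.ReflTransGen (Step f₁ f₂ H.null) (f₁ H.root) x}
  have hcomm : ∀ x ∈ S, f₂ (f₁ x) = f₁ (f₂ x) := by
    rintro x (rfl | hx)
    · rw [hnull₁, hnull₂, hnull₁]
    · exact comm_of_not_exists_coloring_defectPattern hH.1 hf hdefect hx
  have hcorner : ∀ x ∈ S, f₁ x ≠ H.null → f₂ x ≠ H.null → f₁ (f₂ x) ≠ H.null := by
    rintro x (rfl | hx) hx₁ hx₂
    · exact absurd hnull₁ hx₁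
    · exact apply_apply_ne_null_of_not_exists_coloring_defectPattern hH.1 hf hdefect hx hx₁ hx₂
  have mapsTo_of_step {f : γ → γ} (hnull : f H.null = H.null)
      (hstep : ∀ x, f x ≠ H.null → Step f₁ f₂ H.null x (f x)) : Set.MapsTo f S S := by
    rintro x (rfl | hx)
    · exact Or.inl hnull
    · exact or_iff_not_imp_left.2 fun hne => hx.tail (hstep x hne)
  have hstep₁ : ∀ x, f₁ x ≠ H.null → Step f₁ f₂ H.null x (f₁ x) := fun x => And.intro (Or.inl rfl)
  have hstep₂ : ∀ x, f₂ x ≠ H.null → Step f₁ f₂ H.null x (f₂ x) := fun x => And.intro (Or.inr rfl)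
  have hmaps₁ := mapsTo_of_step hnull₁ hstep₁
  have hmaps₂ := mapsTo_of_step hnull₂ hstep₂
  have hacc : Acc (flip (Step f₁ f₂ H.null)) (f₁ H.root) := by
    by_contra hacc
    exact hdefect (exists_coloring_defectPattern_of_not_acc hH.1 hf hacc)
  have hstartS : f₁ H.root ∈ S := Or.inr .refl
  obtain ⟨w, N, hnull⟩ := exists_iterate_iterate_eq_iff hstep₁ hstep₂ hmaps₁ hmaps₂ hnull₁ hnull₂
    hcomm hcorner hstartS hstart.2.2 hacc
  refine ⟨w, N, hf.maps_gridHeap hH.1 hroot hnull fun i j => ?_⟩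
  rw [apply_iterate_eq_iterate_apply hmaps₁ hcomm (hmaps₂.iterate j hstartS),
    Function.iterate_succ_apply']

end PreGraph

namespace GridPattern

theorem heapEquiv_iff_not_exists_tiling {C : Type*} {P : GridPattern C} {G G' : FinGraph}
    (hG : Realizes G P) (hG' : Realizes G' (P.prod defectPattern)) :
    HeapEquiv G.toPreGraph G'.toPreGraph ↔ ¬ ∃ w N τ, P.Tiling w N τ := by
  constructor
  · rintro hequiv ⟨w, N, τ, hτ⟩
    have hmaps : (gridHeap w N).Maps G'.toPreGraph :=
      (hequiv _ _ (isHeap_gridHeap w N)).1 ((hG _ _ (isHeap_gridHeap w N)).2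
        ⟨isRooted_gridHeap w N, hτ.exists_coloring_gridHeap⟩)
    have hcoloring := ((hG' _ _ (isHeap_gridHeap w N)).1 hmaps).2
    obtain ⟨e, he⟩ := (exists_coloring_prod_iff.1 hcoloring).2
    exact not_tiling_defectPattern he.tiling
  · intro htiling γ H hH
    rw [hG γ H hH, hG' γ H hH, exists_coloring_prod_iff]
    refine ⟨fun ⟨hroot, hP⟩ => ⟨hroot, hP, ?_⟩, fun ⟨hroot, hP, _⟩ => ⟨hroot, hP⟩⟩
    by_contra hdefect
    obtain ⟨w, N, hmaps⟩ :=
      PreGraph.exists_maps_gridHeap_of_not_exists_coloring_defectPattern hH hroot hdefect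
    have hmapsG := hmaps.trans ((hG γ H hH).2 ⟨hroot, hP⟩)
    obtain ⟨e, he⟩ := ((hG _ _ (isHeap_gridHeap w N)).1 hmapsG).2
    exact htiling ⟨w, N, _, he.tiling⟩

end GridPattern

section HaltingPattern

open Turing

variable {Γ Λ : Type*} [Inhabited Γ]

theorem nth_mk₁_eq_default (L : List Γ) {p : ℤ} (hp : p < 0 ∨ L.length ≤ p) :
    (Tape.mk₁ L).nth p = default := by
  rcases p with (_ | p) | p
  · obtain rfl : L = [] := List.length_eq_zero_iff.1 (by simpa using hp)
    rfl
  · rcases L with _ | ⟨a, L⟩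
    · exact ListBlank.nth_mk [] p
    · refine (ListBlank.nth_mk L p).trans (List.getI_eq_default _ ?_)
      simp only [List.length_cons, Int.ofNat_eq_natCast] at hp
      omega
  · exact ListBlank.nth_mk [] p

/-- The effect on the tape of an instruction of a `TM0` machine. -/
def applyStmt (T : Tape Γ) : TM0.Stmt Γ → Tape Γ
  | .move d => T.move d
  | .write b => T.write b

theorem step_eq_map_applyStmt [Inhabited Λ] (M : TM0.Machine Γ Λ) (c : TM0.Cfg Γ Λ) :
    TM0.step M c = (M c.q c.Tape.head).map fun x => ⟨x.1, applyStmt c.Tape x.2⟩ := by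
  simp only [TM0.step]
  congr 1

theorem step_eq_some_iff [Inhabited Λ] {M : TM0.Machine Γ Λ} {c c' : TM0.Cfg Γ Λ} :
    TM0.step M c = some c' ↔
      ∃ a, M c.q c.Tape.head = some (c'.q, a) ∧ c'.Tape = applyStmt c.Tape a := by
  rw [step_eq_map_applyStmt, Option.map_eq_some_iff]
  constructor
  · rintro ⟨⟨q, a⟩, hM, rfl⟩
    exact ⟨a, hM, rfl⟩
  · rintro ⟨a, hM, hT⟩
    exact ⟨_, hM, by rw [← hT]⟩

/-- The information about a configuration that is stored in one cell of the grid: whether the row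
is the initial one, the state and the scanned symbol, and the symbols on three consecutive tape
squares. -/
structure TapeCell (Γ Λ : Type*) where
  isInit : Bool
  state : Λ
  head : Γ
  left : Γ
  sym : Γ
  right : Γ
  deriving Inhabited

namespace TapeCell

/-- The cell for the tape square at position `p` relative to the head. -/
def ofCfg (isInit : Bool) (c : TM0.Cfg Γ Λ) (p : ℤ) : TapeCell Γ Λ where
  isInit := isInit
  state := c.q
  head := c.Tape.head
  left := c.Tape.nth (p - 1)
  sym := c.Tape.nth p
  right := c.Tape.nth (p + 1)

open Classical in
/-- The symbol on the square after the machine performs an instruction, if `isHead` says whether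
the square is scanned. -/
noncomputable def nextSym (t : TapeCell Γ Λ) (isHead : Prop) : TM0.Stmt Γ → Γ
  | .move .left => t.left
  | .move .right => t.right
  | .write b => if isHead then b else t.sym

theorem nextSym_ofCfg (b : Bool) (c : TM0.Cfg Γ Λ) (p : ℤ) (isHead : Prop)
    (hp : isHead ↔ p = 0) (a : TM0.Stmt Γ) :
    (ofCfg b c p).nextSym isHead a = (applyStmt c.Tape a).nth p := by
  rcases a with (_ | _) | b
  · exact (Tape.move_left_nth ..).symm
  · exact (Tape.move_right_nth ..).symm
  · simp [nextSym, applyStmt, ofCfg, Tape.write_nth, hp]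

end TapeCell

/-- The steps allowed in the sequence of column indices of a row: the index grows by one, except
that the padding indices `1` and `n + 3` may be repeated. -/
def PadStep (n a b : ℕ) : Prop := b = a + 1 ∨ b = a ∧ (a = 1 ∨ a = n + 3)

/-- The tilings of this pattern are the halting computations of `M` on the input `L`, one
configuration per row. Colours carry a column index: `0` and `L.length + 4` mark the ends of the
row, `1` and `L.length + 3` blank padding, and `p + 2` the square `p` of the input. Relative to the
grid it is the tape that moves, so the scanned square always has index `2`. -/
def haltingPattern [Inhabited Λ] (M : TM0.Machine Γ Λ) (L : List Γ) :
    GridPattern (ℕ × TapeCell Γ Λ) where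
  admissible c := c.1 < L.length + 5 ∧
    (c.2.isInit = true → c.2.state = default ∧ c.2.sym = (Tape.mk₁ L).nth ((c.1 : ℤ) - 2)) ∧
    (c.1 = 2 → c.2.sym = c.2.head) ∧
    (c.1 = 0 → c.2.sym = default ∧ c.2.left = default) ∧
    (c.1 = L.length + 4 → c.2.sym = default ∧ c.2.right = default)
  start c := c.1 = 0 ∧ c.2.isInit = true
  right c c' := PadStep L.length c.1 c'.1 ∧ c.2.isInit = c'.2.isInit ∧ c.2.state = c'.2.state ∧
    c.2.head = c'.2.head ∧ c.2.right = c'.2.sym ∧ c'.2.left = c.2.sym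
  rightEnd c := c.1 = L.length + 4
  up c c' := c'.1 = c.1 ∧ ∃ a, M c.2.state c.2.head = some (c'.2.state, a) ∧
    c'.2.sym = c.2.nextSym (c.1 = 2) a
  upEnd c := M c.2.state c.2.head = none

theorem exists_position_of_padStep {n w : ℕ} {c : ℕ → ℕ} (h0 : c 0 = 0) (hw : c w = n + 4)
    (hstep : ∀ i < w, PadStep n (c i) (c (i + 1))) :
    ∃ k, 0 < k ∧ k + n ≤ w ∧ ∀ i ≤ w, (c i = 2 ↔ i = k) ∧
      ((c i : ℤ) - 2 = i - k ∨ c i < 2 ∧ i < k ∨ n + 2 ≤ c i ∧ k + n ≤ i) := by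
  have hex : ∃ i, 2 ≤ c i := ⟨w, by omega⟩
  obtain ⟨k, hk, hlt⟩ : ∃ k, 2 ≤ c k ∧ ∀ i < k, c i < 2 :=
    ⟨Nat.find hex, Nat.find_spec hex, fun i hi => not_le.1 (Nat.find_min hex hi)⟩
  have hkw : k ≤ w := by
    by_contra! h
    have := hlt w h
    omega
  have hk0 : 0 < k := Nat.pos_of_ne_zero fun h => by
    rw [h] at hk
    omega
  have hge (t : ℕ) (ht : k + t ≤ w) :
      c (k + t) = t + 2 ∨ n + 3 ≤ c (k + t) ∧ n + 1 ≤ t := by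
    induction t with
    | zero =>
      have hprev := hlt (k - 1) (by omega)
      have hlast := hstep (k - 1) (by omega)
      rw [PadStep, Nat.sub_add_cancel hk0] at hlast
      rw [Nat.add_zero]
      omega
    | succ t ih =>
      have hnext := hstep (k + t) (by omega)
      rw [PadStep] at hnext
      rw [← Nat.add_assoc]
      have := ih (by omega)
      omega
  refine ⟨k, hk0, ?_, fun i hi => ?_⟩
  · have := hge (w - k) (by omega)
    rw [Nat.add_sub_cancel' hkw] at this
    omega
  · rcases lt_or_ge i k with hik | hik
    · have := hlt i hik
      omega
    · have := hge (i - k) (by omega)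
      rw [Nat.add_sub_cancel' hik] at this
      omega

/-- The cells `0, …, w` of a row show the configuration `c` with the head in column `k`, and the
tape is blank on and beyond the ends of the row. -/
structure RowShows (row : ℕ → TapeCell Γ Λ) (w k : ℕ) (c : TM0.Cfg Γ Λ) : Prop where
  eq_ofCfg : ∀ i ≤ w, row i = .ofCfg (row i).isInit c ((i : ℤ) - k)
  blank : ∀ p : ℤ, p ≤ -k ∨ (w : ℤ) - k ≤ p → c.Tape.nth p = default

section TilingHalts

variable [Inhabited Λ] {M : TM0.Machine Γ Λ} {L : List Γ} {w N : ℕ}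
  {τ : ℕ → ℕ → ℕ × TapeCell Γ Λ}

theorem index_eq_of_tiling_haltingPattern (hτ : (haltingPattern M L).Tiling w N τ) {i j : ℕ}
    (hi : i ≤ w) (hj : j ≤ N) : (τ i j).1 = (τ i 0).1 := by
  induction j with
  | zero => rfl
  | succ j ih => rw [(hτ.up i hi j hj).1, ih (by omega)]

theorem head_eq_of_tiling_haltingPattern (hτ : (haltingPattern M L).Tiling w N τ) {i i' j : ℕ}
    (hi : i ≤ w) (hi' : i' ≤ w) (hj : j ≤ N) : (τ i j).2.head = (τ i' j).2.head := by
  have head_eq_zero (i : ℕ) (hi : i ≤ w) : (τ i j).2.head = (τ 0 j).2.head := by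
    induction i with
    | zero => rfl
    | succ i ih => rw [← (hτ.right i hi j hj).2.2.2.1, ih (by omega)]
  rw [head_eq_zero i hi, head_eq_zero i' hi']

theorem isInit_of_tiling_haltingPattern (hτ : (haltingPattern M L).Tiling w N τ) {i : ℕ}
    (hi : i ≤ w) : (τ i 0).2.isInit = true := by
  induction i with
  | zero => exact hτ.start.2
  | succ i ih => rw [← (hτ.right i hi 0 zero_le).2.1, ih (by omega)]

theorem sym_eq_default_of_tiling_haltingPattern (hτ : (haltingPattern M L).Tiling w N τ) {j : ℕ}
    (hj : j ≤ N) : (τ 0 j).2.sym = default ∧ (τ 0 j).2.left = default ∧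
      (τ w j).2.sym = default ∧ (τ w j).2.right = default := by
  obtain ⟨-, -, -, hleft, -⟩ := hτ.admissible 0 zero_le j hj
  obtain ⟨-, -, -, -, hright⟩ := hτ.admissible w le_rfl j hj
  have hindex : (τ 0 j).1 = 0 :=
    (index_eq_of_tiling_haltingPattern hτ zero_le hj).trans hτ.start.1
  exact ⟨(hleft hindex).1, (hleft hindex).2, hright (hτ.rightEnd j hj)⟩

theorem rowShows_of_sym_eq (hτ : (haltingPattern M L).Tiling w N τ) {k j : ℕ} (hkw : k ≤ w)
    (hk : (τ k 0).1 = 2) (hj : j ≤ N) {c : TM0.Cfg Γ Λ}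
    (hstate : ∀ i ≤ w, (τ i j).2.state = c.q)
    (hsym : ∀ i ≤ w, (τ i j).2.sym = c.Tape.nth ((i : ℤ) - k))
    (hblank : ∀ p : ℤ, p ≤ -k ∨ (w : ℤ) - k ≤ p → c.Tape.nth p = default) :
    RowShows (fun i => (τ i j).2) w k c := by
  refine ⟨fun i hi => ?_, hblank⟩
  obtain ⟨-, hleft, -, hright⟩ := sym_eq_default_of_tiling_haltingPattern hτ hj
  have hhead : (τ i j).2.head = c.Tape.head := by
    have hk' : (τ k j).1 = 2 := (index_eq_of_tiling_haltingPattern hτ hkw hj).trans hk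
    rw [head_eq_of_tiling_haltingPattern hτ hi hkw hj, ← (hτ.admissible k hkw j hj).2.2.1 hk',
      hsym k hkw, sub_self]
    rfl
  have hleft' : (τ i j).2.left = c.Tape.nth ((i : ℤ) - k - 1) := by
    rcases i with _ | i
    · rw [hleft, hblank _ (by omega)]
    · rw [(hτ.right i hi j hj).2.2.2.2.2, hsym i (by omega)]
      congr 1
      omega
  have hright' : (τ i j).2.right = c.Tape.nth ((i : ℤ) - k + 1) := by
    rcases hi.lt_or_eq with hi | rfl
    · rw [(hτ.right i hi j hj).2.2.2.2.1, hsym (i + 1) hi]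
      congr 1
      omega
    · rw [hright, hblank _ (by omega)]
  simp only [TapeCell.ofCfg, ← hhead, ← hleft', ← hright', ← hsym i hi, ← hstate i hi]

theorem exists_rowShows_init (hτ : (haltingPattern M L).Tiling w N τ) :
    ∃ k ≤ w, (∀ i ≤ w, (τ i 0).1 = 2 ↔ i = k) ∧
      RowShows (fun i => (τ i 0).2) w k (TM0.init L) := by
  obtain ⟨k, hk0, hkw, hk⟩ := exists_position_of_padStep (c := fun i => (τ i 0).1) hτ.start.1
    (hτ.rightEnd 0 zero_le) fun i hi => (hτ.right i hi 0 zero_le).1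
  have hkw' : k ≤ w := by omega
  have hinit (i : ℕ) (hi : i ≤ w) :=
    (hτ.admissible i hi 0 zero_le).2.1 (isInit_of_tiling_haltingPattern hτ hi)
  refine ⟨k, hkw', fun i hi => (hk i hi).1, rowShows_of_sym_eq hτ hkw' ((hk k hkw').1.2 rfl)
    zero_le (fun i hi => (hinit i hi).1) (fun i hi => (hinit i hi).2.trans ?_)
    fun p hp => nth_mk₁_eq_default L (by omega)⟩
  change _ = (Tape.mk₁ L).nth _
  rcases (hk i hi).2 with h | h | h
  · rw [h]
  · rw [nth_mk₁_eq_default L (by omega), nth_mk₁_eq_default L (by omega)]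
  · rw [nth_mk₁_eq_default L (by omega), nth_mk₁_eq_default L (by omega)]

theorem exists_step_rowShows_succ (hτ : (haltingPattern M L).Tiling w N τ) {k j : ℕ} (hkw : k ≤ w)
    (hk : ∀ i ≤ w, (τ i 0).1 = 2 ↔ i = k) (hj : j < N) {c : TM0.Cfg Γ Λ}
    (hrow : RowShows (fun i => (τ i j).2) w k c) :
    ∃ c', TM0.step M c = some c' ∧ RowShows (fun i => (τ i (j + 1)).2) w k c' := by
  obtain ⟨-, a, hM, -⟩ := hτ.up 0 zero_le j hj
  rw [hrow.eq_ofCfg 0 zero_le] at hM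
  have hnext (i : ℕ) (hi : i ≤ w) : (τ i (j + 1)).2.state = (τ 0 (j + 1)).2.state ∧
      (τ i (j + 1)).2.sym = (applyStmt c.Tape a).nth ((i : ℤ) - k) := by
    obtain ⟨-, a', hM', hsym⟩ := hτ.up i hi j hj
    have hhead : (τ i j).1 = 2 ↔ (i : ℤ) - k = 0 := by
      rw [index_eq_of_tiling_haltingPattern hτ hi hj.le, hk i hi]
      omega
    rw [hrow.eq_ofCfg i hi] at hM' hsym
    obtain ⟨hstate, rfl⟩ := Prod.mk.inj (Option.some.inj (hM'.symm.trans hM))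
    exact ⟨hstate, hsym.trans (TapeCell.nextSym_ofCfg _ _ _ _ hhead _)⟩
  refine ⟨⟨_, applyStmt c.Tape a⟩, step_eq_some_iff.2 ⟨a, hM, rfl⟩,
    rowShows_of_sym_eq hτ hkw ((hk k hkw).2 rfl) hj (fun i hi => (hnext i hi).1)
      (fun i hi => (hnext i hi).2) fun p hp => ?_⟩
  obtain ⟨hleft, -, hright, -⟩ := sym_eq_default_of_tiling_haltingPattern hτ hj
  by_cases hp0 : p = -k
  · rw [← hleft, (hnext 0 zero_le).2, hp0, Nat.cast_zero, zero_sub]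
  by_cases hpw : p = (w : ℤ) - k
  · rw [← hright, (hnext w le_rfl).2, hpw]
  rw [← TapeCell.nextSym_ofCfg false c p (p = 0) Iff.rfl]
  rcases a with (_ | _) | b
  · exact hrow.blank _ (by omega)
  · exact hrow.blank _ (by omega)
  · rw [TapeCell.nextSym, if_neg (by omega)]
    exact hrow.blank _ (by omega)

theorem dom_eval_of_tiling_haltingPattern (hτ : (haltingPattern M L).Tiling w N τ) :
    (TM0.eval M L).Dom := by
  obtain ⟨k, hkw, hk, hinit⟩ := exists_rowShows_init hτ
  have hrow (j : ℕ) (hj : j ≤ N) : ∃ c, StateTransition.Reaches (TM0.step M) (TM0.init L) c ∧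
      RowShows (fun i => (τ i j).2) w k c := by
    induction j with
    | zero => exact ⟨_, .refl, hinit⟩
    | succ j ih =>
      obtain ⟨c, hreach, hc⟩ := ih (by omega)
      obtain ⟨c', hstep, hc'⟩ := exists_step_rowShows_succ hτ hkw hk hj hc
      exact ⟨c', hreach.tail hstep, hc'⟩
  obtain ⟨c, hreach, hc⟩ := hrow N le_rfl
  have hhalt : TM0.step M c = none := by
    have hM : M (τ 0 N).2.state (τ 0 N).2.head = none := hτ.upEnd 0 zero_le
    rw [hc.eq_ofCfg 0 zero_le] at hM
    rw [step_eq_map_applyStmt, Option.map_eq_none_iff]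
    exact hM
  exact Part.dom_iff_mem.2 ⟨_, Part.mem_map _ (StateTransition.mem_eval.2 ⟨hreach, hhalt⟩)⟩

end TilingHalts

section HaltsTiling

theorem exists_seq_of_reaches {σ : Type*} {f : σ → Option σ} {a b : σ}
    (h : StateTransition.Reaches f a b) :
    ∃ (N : ℕ) (s : ℕ → σ), s 0 = a ∧ s N = b ∧ ∀ j < N, f (s j) = some (s (j + 1)) := by
  induction h using Relation.ReflTransGen.head_induction_on with
  | refl => exact ⟨0, fun _ => b, rfl, rfl, nofun⟩
  | @head a c hac _ ih =>
    obtain ⟨N, s, rfl, hN, hs⟩ := ih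
    refine ⟨N + 1, fun j => j.casesOn a s, rfl, hN, fun j hj => ?_⟩
    cases j with
    | zero => exact hac
    | succ j => exact hs j (by omega)

variable [Inhabited Λ] {M : TM0.Machine Γ Λ} {L : List Γ}

theorem nth_eq_default_of_steps {N : ℕ} {s : ℕ → TM0.Cfg Γ Λ} (h0 : s 0 = TM0.init L)
    (hs : ∀ j < N, TM0.step M (s j) = some (s (j + 1))) {j : ℕ} (hj : j ≤ N) {p : ℤ}
    (hp : p < -j ∨ L.length + j ≤ p) : (s j).Tape.nth p = default := by
  induction j generalizing p with
  | zero =>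
    rw [h0]
    exact nth_mk₁_eq_default L (by omega)
  | succ j ih =>
    have hj' : j ≤ N := by omega
    obtain ⟨a, -, hT⟩ := step_eq_some_iff.1 (hs j hj)
    rw [hT, ← TapeCell.nextSym_ofCfg false (s j) p (p = 0) Iff.rfl]
    rcases a with (_ | _) | b
    · exact ih hj' (by omega)
    · exact ih hj' (by omega)
    · rw [TapeCell.nextSym, if_neg (by omega)]
      exact ih hj' (by omega)

/-- The index of the column `i` in a row with the head in column `k` and last column `w`. -/
def padIndex (n k w i : ℕ) : ℕ :=
  if i = 0 then 0 else if i < k then 1 else if i = w then n + 4 else min (i - k + 2) (n + 3)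

theorem padIndex_lt (n k w i : ℕ) : padIndex n k w i < n + 5 := by
  grind [padIndex]

theorem padIndex_eq_zero_iff {n k w i : ℕ} : padIndex n k w i = 0 ↔ i = 0 := by
  grind [padIndex]

theorem padIndex_eq_two_iff {n k w i : ℕ} (hk : 0 < k) (hkw : k < w) :
    padIndex n k w i = 2 ↔ i = k := by
  grind [padIndex]

theorem padIndex_eq_add_four_iff {n k w i : ℕ} (hk : 0 < k) (hkw : k < w) :
    padIndex n k w i = n + 4 ↔ i = w := by
  grind [padIndex]

theorem padStep_padIndex {n k w i : ℕ} (hk : 1 < k) (hkw : k + n + 1 < w) (hi : i < w) :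
    PadStep n (padIndex n k w i) (padIndex n k w (i + 1)) := by
  grind [padIndex, PadStep]

theorem nth_mk₁_padIndex {k w i : ℕ} (hk : 0 < k) (hkw : k + L.length < w) :
    (Tape.mk₁ L).nth ((padIndex L.length k w i : ℤ) - 2) = (Tape.mk₁ L).nth ((i : ℤ) - k) := by
  obtain hi | hi | hi : (padIndex L.length k w i : ℤ) - 2 = i - k ∨
      padIndex L.length k w i < 2 ∧ i < k ∨
      L.length + 2 ≤ padIndex L.length k w i ∧ k + L.length ≤ i := by
    grind [padIndex]
  · rw [hi]
  · rw [nth_mk₁_eq_default L (by omega), nth_mk₁_eq_default L (by omega)]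
  · rw [nth_mk₁_eq_default L (by omega), nth_mk₁_eq_default L (by omega)]

theorem exists_tiling_haltingPattern_of_steps {N : ℕ} {s : ℕ → TM0.Cfg Γ Λ}
    (h0 : s 0 = TM0.init L) (hs : ∀ j < N, TM0.step M (s j) = some (s (j + 1)))
    (hN : TM0.step M (s N) = none) : ∃ w τ, (haltingPattern M L).Tiling w N τ := by
  obtain ⟨k, hk⟩ : ∃ k, k = N + 2 := ⟨_, rfl⟩
  obtain ⟨w, hw⟩ : ∃ w, w = k + L.length + N + 2 := ⟨_, rfl⟩
  have hk0 : 0 < k := by omega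
  have hkw : k < w := by omega
  have hblank {j : ℕ} (hj : j ≤ N) {p : ℤ} (hp : p < -j ∨ L.length + j ≤ p) :
      (s j).Tape.nth p = default := nth_eq_default_of_steps h0 hs hj hp
  refine ⟨w, fun i j =>
    (padIndex L.length k w i, .ofCfg (decide (j = 0)) (s j) ((i : ℤ) - k)),
    ?_, ⟨rfl, rfl⟩, ?_, ?_, ?_, ?_⟩
  · intro i hi j hj
    refine ⟨padIndex_lt .., fun hj0 => ?_, fun hindex => ?_, fun hindex => ?_, fun hindex => ?_⟩
    · obtain rfl : j = 0 := of_decide_eq_true hj0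
      simp only [TapeCell.ofCfg, h0]
      exact ⟨rfl, (nth_mk₁_padIndex hk0 (by omega)).symm⟩
    · obtain rfl := (padIndex_eq_two_iff hk0 hkw).1 hindex
      simp only [TapeCell.ofCfg, sub_self]
      rfl
    · obtain rfl := padIndex_eq_zero_iff.1 hindex
      exact ⟨hblank hj (by omega), hblank hj (by omega)⟩
    · obtain rfl := (padIndex_eq_add_four_iff hk0 hkw).1 hindex
      exact ⟨hblank hj (by omega), hblank hj (by omega)⟩
  · intro i hi j hj
    refine ⟨padStep_padIndex (by omega) (by omega) hi, rfl, rfl, rfl, ?_, ?_⟩ <;>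
      simp only [TapeCell.ofCfg] <;> congr 1 <;> push_cast <;> ring
  · exact fun j _ => (padIndex_eq_add_four_iff hk0 hkw).2 rfl
  · intro i _ j hj
    obtain ⟨a, hM, hT⟩ := step_eq_some_iff.1 (hs j hj)
    refine ⟨rfl, a, hM, ?_⟩
    rw [TapeCell.nextSym_ofCfg _ _ _ _ ((padIndex_eq_two_iff hk0 hkw).trans (by omega)), ← hT]
    rfl
  · intro i _
    rwa [step_eq_map_applyStmt, Option.map_eq_none_iff] at hN

theorem exists_tiling_haltingPattern_iff :
    (∃ w N τ, (haltingPattern M L).Tiling w N τ) ↔ (TM0.eval M L).Dom := by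
  refine ⟨fun ⟨_, _, _, hτ⟩ => dom_eval_of_tiling_haltingPattern hτ, fun hdom => ?_⟩
  obtain ⟨c, hc⟩ := Part.dom_iff_mem.1 (show (StateTransition.eval _ _).Dom from hdom)
  obtain ⟨hreach, hhalt⟩ := StateTransition.mem_eval.1 hc
  obtain ⟨N, s, h0, rfl, hs⟩ := exists_seq_of_reaches hreach
  obtain ⟨w, τ, hτ⟩ := exists_tiling_haltingPattern_of_steps h0 hs hhalt
  exact ⟨w, N, τ, hτ⟩

end HaltsTiling

end HaltingPattern

section UndecidableMachine

open Turing

theorem exists_partrec_apply_eq {e : ℕ → ℕ} (he : Computable e) (hinj : Function.Injective e)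
    {f : ℕ →. ℕ} (hf : Partrec f) : ∃ p : ℕ →. ℕ, Partrec p ∧ ∀ m, p (e m) = f m := by
  refine ⟨fun k => (Nat.rfind fun m => Part.some (decide (e m = k))).bind f, ?_, fun m => ?_⟩
  · refine Partrec.bind (Partrec.rfind ?_) (hf.comp Computable.snd).to₂
    have heq : Computable fun x : ℕ × ℕ => decide (e x.2 = x.1) :=
      Primrec.eq.decide.to_comp.comp (he.comp Computable.snd) Computable.fst
    exact heq.partrec.to₂
  · have hfind : (Nat.rfind fun k => Part.some (decide (e k = e m))) = Part.some m := by
      refine Part.eq_some_iff.2 (Nat.mem_rfind.2 ⟨by simp, fun {k} hk => ?_⟩)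
      simpa [hinj.eq_iff] using hk.ne
    exact (congrArg (Part.bind · f) hfind).trans (Part.bind_some m f)

theorem exists_code_not_computablePred_dom_eval {e : ℕ → ℕ} (he : Computable e)
    (hinj : Function.Injective e) :
    ∃ c : ToPartrec.Code, ¬ ComputablePred fun m : ℕ => (c.eval [e m]).Dom := by
  obtain ⟨p, hp, hpe⟩ := exists_partrec_apply_eq he hinj
    (f := fun m => Nat.Partrec.Code.eval (Denumerable.ofNat Nat.Partrec.Code m) 0)
    (Nat.Partrec.Code.eval_part.comp (Computable.ofNat _) (Computable.const 0))
  obtain ⟨c, hc⟩ := ToPartrec.Code.exists_code (Nat.Partrec'.part_iff₁.2 hp)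
  refine ⟨c, fun h => ComputablePred.halting_problem 0 ?_⟩
  refine ComputablePred.computable_of_manyOneReducible ⟨_, Computable.encode, fun d => ?_⟩ h
  have hcode : c.eval [e (Encodable.encode d)] = pure <$> p (e (Encodable.encode d)) :=
    hc ⟨[e (Encodable.encode d)], rfl⟩
  rw [hcode, hpe, Denumerable.ofNat_encode]
  rfl

/-- The number `2 ^ m - 1`. Its binary expansion consists of `m` ones, so that a machine that reads
`binaryOnes m` instead of `m` is started on a tape with a simple closed form. -/
def binaryOnes : ℕ → ℕ
  | 0 => 0
  | m + 1 => 2 * binaryOnes m + 1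

theorem binaryOnes_injective : Function.Injective binaryOnes :=
  (strictMono_nat_of_lt_succ fun m => by rw [binaryOnes]; omega).injective

theorem primrec_binaryOnes : Primrec binaryOnes := by
  have hrec : Primrec fun m : ℕ => Nat.rec (motive := fun _ => ℕ) 0 (fun _ x => 2 * x + 1) m :=
    Primrec.nat_rec₁ 0 (Primrec.succ.comp (Primrec.nat_mul.comp (Primrec.const 2) Primrec.snd))
  refine hrec.of_eq fun m => ?_
  induction m with
  | zero => rfl
  | succ m ih => rw [binaryOnes, ← ih]

theorem trNat_binaryOnes (m : ℕ) :
    PartrecToTM2.trNat (binaryOnes m) = List.replicate m PartrecToTM2.Γ'.bit1 := by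
  induction m with
  | zero => exact PartrecToTM2.trNat_zero
  | succ m ih =>
    have hbit : (binaryOnes (m + 1) : Num) = Num.bit1 (binaryOnes m : Num) := by
      rw [← Num.ofNat'_eq, ← Num.ofNat'_eq]
      exact Num.ofNat'_bit true (binaryOnes m)
    rw [PartrecToTM2.trNat, hbit, List.replicate_succ, ← ih, PartrecToTM2.trNat]
    cases (binaryOnes m : Num) <;> rfl

theorem dom_eval_tr_iff (c : ToPartrec.Code) (v : List ℕ) :
    letI : Inhabited PartrecToTM2.Λ' := ⟨PartrecToTM2.trNormal c .halt⟩
    (TM0.eval (TM1to0.tr (TM2to1.tr PartrecToTM2.tr))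
      (TM2to1.trInit .main (PartrecToTM2.trList v))).Dom ↔ (c.eval v).Dom := by
  let _ : Inhabited PartrecToTM2.Λ' := ⟨PartrecToTM2.trNormal c .halt⟩
  have hinit : TM2.init .main (PartrecToTM2.trList v) = PartrecToTM2.init c v := by
    unfold TM2.init PartrecToTM2.init
    congr 1
    funext k
    cases k <;> rfl
  have heval : (TM2.eval PartrecToTM2.tr .main (PartrecToTM2.trList v)).Dom ↔ (c.eval v).Dom := by
    unfold TM2.eval
    rw [hinit, PartrecToTM2.tr_eval]
    rfl
  rw [← heval, TM1to0.tr_eval]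
  exact TM2to1.tr_eval_dom PartrecToTM2.tr _ _

theorem exists_machine_of_supports {Γ Λ : Type*} [Inhabited Γ] [Inhabited Λ]
    {M : TM0.Machine Γ Λ} {S : Set Λ} (hS : TM0.Supports M S) :
    ∃ (_ : Inhabited S) (M' : TM0.Machine Γ S),
      ∀ L, (TM0.eval M' L).Dom ↔ (TM0.eval M L).Dom := by
  classical
  let _ : Inhabited S := ⟨⟨default, hS.1⟩⟩
  let restrict : PointedMap Λ S :=
    ⟨fun q => if hq : q ∈ S then ⟨q, hq⟩ else default, dif_pos hS.1⟩
  have hrestrict (q : Λ) (hq : q ∈ S) : (restrict q : Λ) = q := by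
    change ((if hq : q ∈ S then ⟨q, hq⟩ else default : S) : Λ) = q
    rw [dif_pos hq]
  let symbol : PointedMap Γ Γ := ⟨id, rfl⟩
  refine ⟨inferInstance, M.map symbol symbol restrict (↑), fun L => ?_⟩
  refine StateTransition.tr_eval_dom (M.map_respects symbol symbol restrict (↑) hS
    (fun _ => rfl) hrestrict) ⟨hS.1, ?_⟩
  rw [TM0.map_init]
  exact congrArg TM0.init L.map_id

instance : Finite PartrecToTM2.K' :=
  .of_injective (fun k => (k.rec 0 1 2 3 : Fin 4)) fun k k' => by
    cases k <;> cases k' <;> simp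

/-- The symbol of the one-tape simulation that holds the entry `a` of the main stack, on the bottom
square of the stacks if `bottom` is `true`. -/
def mainStackSymbol (bottom : Bool) (a : PartrecToTM2.Γ') :
    TM2to1.Γ' PartrecToTM2.K' fun _ => PartrecToTM2.Γ' :=
  (bottom, Function.update (fun _ => none) .main (some a))

theorem trInit_trList_binaryOnes (m : ℕ) :
    TM2to1.trInit PartrecToTM2.K'.main (PartrecToTM2.trList [binaryOnes m]) =
      mainStackSymbol true .cons :: List.replicate m (mainStackSymbol false .bit1) := by
  rw [PartrecToTM2.trList, PartrecToTM2.trList, trNat_binaryOnes, TM2to1.trInit,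
    List.reverse_append, List.reverse_replicate]
  exact congrArg (mainStackSymbol true .cons :: ·) List.map_replicate

theorem exists_machine_not_computablePred_dom_eval :
    ∃ (Γ Λ : Type) (_ : Inhabited Γ) (_ : Inhabited Λ) (_ : Finite Γ) (_ : Finite Λ)
      (M : TM0.Machine Γ Λ) (X B : Γ),
      ¬ ComputablePred fun n : ℕ => (TM0.eval M (X :: List.replicate n B)).Dom := by
  obtain ⟨c, hc⟩ := exists_code_not_computablePred_dom_eval primrec_binaryOnes.to_comp
    binaryOnes_injective
  let _ : Inhabited PartrecToTM2.Λ' := ⟨PartrecToTM2.trNormal c .halt⟩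
  obtain ⟨_, M, hM⟩ := exists_machine_of_supports (TM1to0.tr_supports _
    (TM2to1.tr_supports PartrecToTM2.tr (PartrecToTM2.tr_supports c .halt)))
  refine ⟨_, _, inferInstance, inferInstance, ?_, inferInstance, M, mainStackSymbol true .cons,
    mainStackSymbol false .bit1, fun h => hc (h.of_eq fun m => ?_)⟩
  · exact inferInstanceAs (Finite (Bool × (PartrecToTM2.K' → Option PartrecToTM2.Γ')))
  · rw [← trInit_trList_binaryOnes]
    exact (hM _).trans (dom_eval_tr_iff c _)

end UndecidableMachine

namespace GridPattern

open Encodable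

variable {γ C : Type*} [Encodable C] [Inhabited C]

/-- The colour represented by a node `a ≥ 2` of a graph `P.toFinGraph N`. -/
def nodeColor (a : ℕ) : C := (decode (a - 2)).getD default

@[simp]
theorem nodeColor_encode_add_two (c : C) : nodeColor (encode c + 2) = c := by
  simp [nodeColor]

/-- The `s1`-edges of `P.toFinGraph N`. -/
def EdgeRight (P : GridPattern C) (a b : ℕ) : Prop :=
  a = 0 ∧ b = 0 ∨ a = 1 ∧ 2 ≤ b ∧ P.start (nodeColor b) ∨
  2 ≤ a ∧ P.admissible (nodeColor a) ∧
    (b = 0 ∧ P.rightEnd (nodeColor a) ∨ 2 ≤ b ∧ P.right (nodeColor a) (nodeColor b))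

/-- The `s2`-edges of `P.toFinGraph N`. -/
def EdgeUp (P : GridPattern C) (a b : ℕ) : Prop :=
  a ≤ 1 ∧ b = 0 ∨
  2 ≤ a ∧ P.admissible (nodeColor a) ∧
    (b = 0 ∧ P.upEnd (nodeColor a) ∨ 2 ≤ b ∧ P.up (nodeColor a) (nodeColor b))

open Classical in
/-- The graph realizing a pattern whose admissible colours have codes less than `N`. The node `0` is
`null`, the node `1` is `root`, and the node `k + 2` represents the colour with code `k`. -/
noncomputable def toFinGraph (P : GridPattern C) (N : ℕ) : FinGraph where
  n := N + 2
  s1 i j := decide (P.EdgeRight i j)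
  s2 i j := decide (P.EdgeUp i j)
  null := 0
  root := 1
  root_ne_null := Fin.zero_ne_one.symm
  null_s1 _ := by simp [EdgeRight]
  null_s2 _ := by simp [EdgeUp]

variable {P : GridPattern C} {N : ℕ} {H : PreGraph γ}

open Classical in
theorem maps_toFinGraph_iff : H.Maps (P.toFinGraph N).toPreGraph ↔ ∃ f : γ → ℕ,
    (∀ x, f x < N + 2) ∧ (∀ x y, H.s1 x y → P.EdgeRight (f x) (f y)) ∧
    (∀ x y, H.s2 x y → P.EdgeUp (f x) (f y)) ∧ (∀ x ∈ H.V, f x = 1 ↔ x = H.root) ∧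
    ∀ x ∈ H.V, f x = 0 ↔ x = H.null := by
  constructor
  · rintro ⟨h, -, h1, h2, hroot, hnull⟩
    refine ⟨fun x => (h x).val, fun x => (h x).isLt, fun x y hxy => of_decide_eq_true (h1 x y hxy),
      fun x y hxy => of_decide_eq_true (h2 x y hxy), fun x hx => ?_, fun x hx => ?_⟩
    · exact (Fin.ext_iff (b := (1 : Fin (N + 2)))).symm.trans (hroot x hx)
    · exact (Fin.ext_iff (b := (0 : Fin (N + 2)))).symm.trans (hnull x hx)
  · rintro ⟨f, hN, h1, h2, hroot, hnull⟩
    refine ⟨fun x => ⟨f x, hN x⟩, fun _ _ => trivial, fun x y hxy => decide_eq_true (h1 x y hxy),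
      fun x y hxy => decide_eq_true (h2 x y hxy), fun x hx => ?_, fun x hx => ?_⟩
    · exact (Fin.ext_iff (b := (1 : Fin (N + 2)))).trans (hroot x hx)
    · exact (Fin.ext_iff (b := (0 : Fin (N + 2)))).trans (hnull x hx)

theorem isRooted_of_maps_toFinGraph (hH : H.IsHeap) (h : H.Maps (P.toFinGraph N).toPreGraph) :
    H.IsRooted := by
  obtain ⟨f, -, h1, h2, hroot, hnull⟩ := maps_toFinGraph_iff.1 h
  obtain ⟨⟨-, hnullV, hrootV, -, -, hs2, -⟩, -, hs2_total, -⟩ := hH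
  have hroot1 : f H.root = 1 := (hroot _ hrootV).2 rfl
  have hnull0 : f H.null = 0 := (hnull _ hnullV).2 rfl
  refine ⟨?_, fun h => ?_, fun x h => ?_, fun x h => ?_⟩
  · obtain ⟨y, hy, -⟩ := hs2_total _ hrootV
    have hy0 : f y = 0 := by grind [EdgeUp]
    rwa [(hnull y (hs2 _ _ hy).2).1 hy0] at hy
  · grind [EdgeRight]
  · grind [EdgeRight]
  · grind [EdgeUp]

theorem exists_coloring_of_maps_toFinGraph (hH : H.IsHeap)
    (h : H.Maps (P.toFinGraph N).toPreGraph) : ∃ e, P.Coloring H e := by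
  obtain ⟨f, -, h1, h2, hroot, hnull⟩ := maps_toFinGraph_iff.1 h
  obtain ⟨hgraph, hs1_total, -⟩ := hH
  have hroot1 : f H.root = 1 := (hroot _ hgraph.2.2.1).2 rfl
  have hnull0 : f H.null = 0 := (hnull _ hgraph.2.1).2 rfl
  have hinner {x : γ} (hx : H.IsInner x) : 2 ≤ f x := by
    have := mt (hroot x hx.1).1 hx.2.1
    have := mt (hnull x hx.1).1 hx.2.2
    omega
  refine ⟨fun x => nodeColor (f x), fun x hx => ?_, fun x hx => ?_, fun x y hx hy hxy => ?_,
    fun x hx hxy => ?_, fun x y hx hy hxy => ?_, fun x hx hxy => ?_⟩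
  · obtain ⟨y, hy, -⟩ := hs1_total x hx.1
    grind [EdgeRight]
  all_goals grind [EdgeRight, EdgeUp]

open Classical in
theorem maps_toFinGraph_of_coloring (hH : H.IsHeap)
    (hN : ∀ c, P.admissible c → encode c < N) (hrooted : H.IsRooted) {e : γ → C}
    (he : P.Coloring H e) :
    H.Maps (P.toFinGraph N).toPreGraph := by
  obtain ⟨hgraph, -, hs2_total, -⟩ := hH
  obtain ⟨-, -, hrootV, hne, hs1, hs2, hnull1, hnull2⟩ := id hgraph
  have cases_node {x : γ} (hx : x ∈ H.V) := PreGraph.eq_null_or_eq_root_or_isInner hx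
  obtain ⟨f, hf⟩ : ∃ f : γ → ℕ, ∀ x,
    f x = if x = H.root then 1 else if H.IsInner x then encode (e x) + 2 else 0 := ⟨_, fun _ => rfl⟩
  have hf_root : f H.root = 1 := by simp [hf]
  have hf_null : f H.null = 0 := by simp [hf, hne.symm, PreGraph.IsInner]
  have hf_inner {x : γ} (hx : H.IsInner x) : f x = encode (e x) + 2 := by simp [hf, hx, hx.2.1]
  refine maps_toFinGraph_iff.2 ⟨f, fun x => ?_, fun x y hxy => ?_, fun x y hxy => ?_,
    fun x hx => ?_, fun x hx => ?_⟩
  · have := fun hx => hN _ (he.admissible x hx)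
    rw [hf]
    split_ifs with h h' <;> grind
  · rcases cases_node (hs1 x y hxy).1 with rfl | rfl | hx
    · grind [EdgeRight]
    · grind [EdgeRight, nodeColor_encode_add_two, he.start y hxy,
        hrooted.isInner_of_s1_root hgraph hxy]
    · rcases cases_node (hs1 x y hxy).2 with rfl | rfl | hy
      · grind [EdgeRight, nodeColor_encode_add_two, he.admissible x hx, he.rightEnd x hx hxy]
      · exact absurd hxy (hrooted.not_s1_root x)
      · grind [EdgeRight, nodeColor_encode_add_two, he.admissible x hx, he.right x y hx hy hxy]
  · rcases cases_node (hs2 x y hxy).1 with rfl | rfl | hx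
    · grind [EdgeUp]
    · grind [EdgeUp, (hs2_total _ hrootV).unique hxy hrooted.s2_root_null]
    · rcases cases_node (hs2 x y hxy).2 with rfl | rfl | hy
      · grind [EdgeUp, nodeColor_encode_add_two, he.admissible x hx, he.upEnd x hx hxy]
      · exact absurd hxy (hrooted.not_s2_root x)
      · grind [EdgeUp, nodeColor_encode_add_two, he.admissible x hx, he.up x y hx hy hxy]
  · rcases cases_node hx with rfl | rfl | hx
    · simp [hf_null, hne.symm]
    · simp [hf_root]
    · simp [hf_inner hx, hx.2.1]
  · rcases cases_node hx with rfl | rfl | hx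
    · simp [hf_null]
    · simp [hf_root, hne]
    · simp [hf_inner hx, hx.2.2]

theorem realizes_toFinGraph (hN : ∀ c, P.admissible c → encode c < N) :
    Realizes (P.toFinGraph N) P := fun _ _ hH =>
  ⟨fun h => ⟨isRooted_of_maps_toFinGraph hH h, exists_coloring_of_maps_toFinGraph hH h⟩,
    fun ⟨hrooted, _, he⟩ => maps_toFinGraph_of_coloring hH hN hrooted he⟩

end GridPattern

theorem FinGraph.encode_injective : Function.Injective FinGraph.encode := by
  intro G G' h
  cases G
  cases G'
  obtain ⟨rfl, hdata⟩ := Sigma.mk.inj (Encodable.encode_injective h)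
  simpa using hdata

theorem exists_forall_encode_lt (α : Type*) [Encodable α] [Finite α] :
    ∃ N, ∀ a : α, Encodable.encode a < N :=
  have ⟨N, hN⟩ := (Set.finite_range (Encodable.encode : α → ℕ)).bddAbove
  ⟨N + 1, fun a => Nat.lt_succ_of_le (hN ⟨a, rfl⟩)⟩

theorem encode_prod_lt {α β : Type*} [Encodable α] [Encodable β] {N N' : ℕ} {c : α × β}
    (h : Encodable.encode c.1 < N) (h' : Encodable.encode c.2 < N') :
    Encodable.encode c < Nat.pair N N' :=
  (Nat.pair_lt_pair_left _ h).trans (Nat.pair_lt_pair_right _ h')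

section Primrec

open Primrec

theorem primrecPred_of_finite {α : Type*} [Primcodable α] [Finite α] (p : α → Prop) :
    PrimrecPred p := by
  classical
  exact ⟨_, dom_finite fun a => decide (p a)⟩

theorem primrecPred_imp {α : Type*} [Primcodable α] {p q : α → Prop} (hp : PrimrecPred p)
    (hq : PrimrecPred q) : PrimrecPred fun a => p a → q a :=
  (hp.not.or hq).of_eq fun _ => imp_iff_not_or.symm

theorem encode_list_eq_encode_map_encode {α : Type*} [Encodable α] (l : List α) :
    Encodable.encode l = Encodable.encode (l.map Encodable.encode) := by
  induction l with
  | nil => rfl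
  | cons a l ih => simp [Encodable.encode_list_cons, ih]

theorem encode_finPi_eq_encode_list {α : Type*} [Encodable α] (N : ℕ) (f : ℕ → α) :
    Encodable.encode (fun i : Fin N => f i) =
      Encodable.encode ((List.range N).map fun i => Nat.pair i (Encodable.encode (f i))) := by
  have hvector : Encodable.encode (fun i : Fin N => f i) =
      Encodable.encode (List.Vector.ofFn fun i : Fin N => (⟨i, f i⟩ : Σ _ : Fin N, α)).toList := rfl
  rw [hvector, List.Vector.toList_ofFn, encode_list_eq_encode_map_encode, List.map_ofFn]
  refine congrArg Encodable.encode (List.ext_getElem (by simp) fun i _ _ => ?_)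
  rw [List.getElem_ofFn, List.getElem_map, List.getElem_range]
  rfl

theorem primrec_encode_finPi {α : Type*} {β : α → Type*} [Primcodable α]
    [∀ a, Encodable (β a)] {N : α → ℕ} {f : ∀ a, ℕ → β a} (hN : Primrec N)
    (hf : Primrec fun x : α × ℕ => Encodable.encode (f x.1 x.2)) :
    Primrec fun a => Encodable.encode fun i : Fin (N a) => f a i := by
  simp only [encode_finPi_eq_encode_list]
  exact Primrec.encode.comp (list_map (list_range.comp hN) (Primrec₂.natPair.comp snd hf))

end Primrec

namespace GridPattern

open Primrec

variable {C D : Type*} [Primcodable C] [Primcodable D]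

/-- The patterns `P n` are primitive recursive uniformly in `n`, and there is a primitive recursive
bound on the codes of their admissible colours. -/
structure PrimrecFamily (P : ℕ → GridPattern C) : Prop where
  admissible : PrimrecPred fun x : ℕ × C => (P x.1).admissible x.2
  start : PrimrecPred fun x : ℕ × C => (P x.1).start x.2
  right : PrimrecPred fun x : ℕ × C × C => (P x.1).right x.2.1 x.2.2
  rightEnd : PrimrecPred fun x : ℕ × C => (P x.1).rightEnd x.2
  up : PrimrecPred fun x : ℕ × C × C => (P x.1).up x.2.1 x.2.2
  upEnd : PrimrecPred fun x : ℕ × C => (P x.1).upEnd x.2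
  exists_bound : ∃ N : ℕ → ℕ, Primrec N ∧ ∀ n c, (P n).admissible c → Encodable.encode c < N n

theorem primrecFamily_const [Finite C] (P : GridPattern C) : PrimrecFamily fun _ => P where
  admissible := (primrecPred_of_finite P.admissible).comp snd
  start := (primrecPred_of_finite P.start).comp snd
  right := (primrecPred_of_finite fun x : C × C => P.right x.1 x.2).comp snd
  rightEnd := (primrecPred_of_finite P.rightEnd).comp snd
  up := (primrecPred_of_finite fun x : C × C => P.up x.1 x.2).comp snd
  upEnd := (primrecPred_of_finite P.upEnd).comp snd
  exists_bound := by
    obtain ⟨N, hN⟩ := exists_forall_encode_lt C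
    exact ⟨fun _ => N, .const N, fun _ c _ => hN c⟩

theorem PrimrecFamily.prod {P : ℕ → GridPattern C} {Q : ℕ → GridPattern D}
    (hP : PrimrecFamily P) (hQ : PrimrecFamily Q) : PrimrecFamily fun n => (P n).prod (Q n) := by
  have hfst : Primrec fun x : ℕ × C × D => (x.1, x.2.1) := fst.pair (fst.comp snd)
  have hsnd : Primrec fun x : ℕ × C × D => (x.1, x.2.2) := fst.pair (snd.comp snd)
  have hfst₂ : Primrec fun x : ℕ × (C × D) × (C × D) => (x.1, x.2.1.1, x.2.2.1) :=
    fst.pair ((fst.comp (fst.comp snd)).pair (fst.comp (snd.comp snd)))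
  have hsnd₂ : Primrec fun x : ℕ × (C × D) × (C × D) => (x.1, x.2.1.2, x.2.2.2) :=
    fst.pair ((snd.comp (fst.comp snd)).pair (snd.comp (snd.comp snd)))
  obtain ⟨N, hN, hN_lt⟩ := hP.exists_bound
  obtain ⟨N', hN', hN'_lt⟩ := hQ.exists_bound
  exact
    { admissible := (hP.admissible.comp hfst).and (hQ.admissible.comp hsnd)
      start := (hP.start.comp hfst).and (hQ.start.comp hsnd)
      right := (hP.right.comp hfst₂).and (hQ.right.comp hsnd₂)
      rightEnd := (hP.rightEnd.comp hfst).and (hQ.rightEnd.comp hsnd)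
      up := (hP.up.comp hfst₂).and (hQ.up.comp hsnd₂)
      upEnd := (hP.upEnd.comp hfst).and (hQ.upEnd.comp hsnd)
      exists_bound := ⟨_, Primrec₂.natPair.comp hN hN', fun n c hc =>
        encode_prod_lt (hN_lt n _ hc.1) (hN'_lt n _ hc.2)⟩ }

section ToFinGraph

variable [Inhabited C] {P : ℕ → GridPattern C}

theorem primrec_nodeColor : Primrec (nodeColor : ℕ → C) :=
  option_getD_default.comp (Primrec.decode.comp (nat_sub.comp .id (.const 2)))

theorem PrimrecFamily.edgeRight (hP : PrimrecFamily P) :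
    PrimrecPred fun x : ℕ × ℕ × ℕ => (P x.1).EdgeRight x.2.1 x.2.2 := by
  have hn : Primrec fun x : ℕ × ℕ × ℕ => x.1 := fst
  have ha : Primrec fun x : ℕ × ℕ × ℕ => x.2.1 := fst.comp snd
  have hb : Primrec fun x : ℕ × ℕ × ℕ => x.2.2 := snd.comp snd
  have hca : Primrec fun x : ℕ × ℕ × ℕ => (nodeColor x.2.1 : C) := primrec_nodeColor.comp ha
  have hcb : Primrec fun x : ℕ × ℕ × ℕ => (nodeColor x.2.2 : C) := primrec_nodeColor.comp hb
  have two_le {f : ℕ × ℕ × ℕ → ℕ} (hf : Primrec f) := nat_le.comp (.const 2) hf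
  have eq_const (k : ℕ) {f : ℕ × ℕ × ℕ → ℕ} (hf : Primrec f) := Primrec.eq.comp hf (.const k)
  exact ((eq_const 0 ha).and (eq_const 0 hb)).or <|
    ((eq_const 1 ha).and ((two_le hb).and (hP.start.comp (hn.pair hcb)))).or <|
    (two_le ha).and <| (hP.admissible.comp (hn.pair hca)).and <|
    ((eq_const 0 hb).and (hP.rightEnd.comp (hn.pair hca))).or
      ((two_le hb).and (hP.right.comp (hn.pair (hca.pair hcb))))

theorem PrimrecFamily.edgeUp (hP : PrimrecFamily P) :
    PrimrecPred fun x : ℕ × ℕ × ℕ => (P x.1).EdgeUp x.2.1 x.2.2 := by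
  have hn : Primrec fun x : ℕ × ℕ × ℕ => x.1 := fst
  have ha : Primrec fun x : ℕ × ℕ × ℕ => x.2.1 := fst.comp snd
  have hb : Primrec fun x : ℕ × ℕ × ℕ => x.2.2 := snd.comp snd
  have hca : Primrec fun x : ℕ × ℕ × ℕ => (nodeColor x.2.1 : C) := primrec_nodeColor.comp ha
  have hcb : Primrec fun x : ℕ × ℕ × ℕ => (nodeColor x.2.2 : C) := primrec_nodeColor.comp hb
  have two_le {f : ℕ × ℕ × ℕ → ℕ} (hf : Primrec f) := nat_le.comp (.const 2) hf
  have eq_zero := Primrec.eq.comp hb (.const 0)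
  exact ((nat_le.comp ha (.const 1)).and eq_zero).or <|
    (two_le ha).and <| (hP.admissible.comp (hn.pair hca)).and <|
    (eq_zero.and (hP.upEnd.comp (hn.pair hca))).or
      ((two_le hb).and (hP.up.comp (hn.pair (hca.pair hcb))))

open Classical in
theorem primrec_encode_relation {R : ℕ → ℕ → ℕ → Prop} {N : ℕ → ℕ} (hN : Primrec N)
    (hR : PrimrecPred fun x : ℕ × ℕ × ℕ => R x.1 x.2.1 x.2.2) :
    Primrec fun n => Encodable.encode fun i j : Fin (N n) => decide (R n i j) :=
  primrec_encode_finPi (f := fun n i => fun j : Fin (N n) => decide (R n i j)) hN <|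
    primrec_encode_finPi (f := fun (x : ℕ × ℕ) j => decide (R x.1 x.2 j)) (hN.comp fst) <|
    Primrec.encode.comp <| hR.decide.comp <|
    (fst.comp fst).pair ((snd.comp fst).pair snd)

theorem PrimrecFamily.primrec_encode_toFinGraph (hP : PrimrecFamily P) {N : ℕ → ℕ}
    (hN : Primrec N) : Primrec fun n => ((P n).toFinGraph (N n)).encode :=
  have hsize : Primrec fun n => N n + 2 := nat_add.comp hN (.const 2)
  Primrec₂.natPair.comp hsize <|
    Primrec₂.natPair.comp (primrec_encode_relation hsize hP.edgeRight) <|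
    Primrec₂.natPair.comp (primrec_encode_relation hsize hP.edgeUp) (.const (Nat.pair 0 1))

theorem PrimrecFamily.exists_realizes (hP : PrimrecFamily P) :
    ∃ F : ℕ → FinGraph, Primrec (fun n => (F n).encode) ∧ ∀ n, Realizes (F n) (P n) := by
  obtain ⟨N, hN, hN_lt⟩ := hP.exists_bound
  exact ⟨_, hP.primrec_encode_toFinGraph hN, fun n => realizes_toFinGraph (hN_lt n)⟩

end ToFinGraph

end GridPattern

section HaltingPatternFamily

open Turing Primrec GridPattern

variable {Γ Λ : Type*}

instance TapeCell.finite [Finite Γ] [Finite Λ] : Finite (TapeCell Γ Λ) :=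
  Finite.of_injective
    (fun t : TapeCell Γ Λ => (t.isInit, t.state, t.head, t.left, t.sym, t.right)) fun t t' h => by
    cases t
    cases t'
    simpa using h

theorem nth_mk₁_cons_replicate [Inhabited Γ] (X B : Γ) (n c : ℕ) :
    (Tape.mk₁ (X :: List.replicate n B)).nth ((c : ℤ) - 2) =
      if c = 2 then X else if 3 ≤ c ∧ c ≤ n + 2 then B else default := by
  rcases le_or_gt 2 c with hc | hc
  · obtain ⟨_ | k, rfl⟩ := Nat.exists_eq_add_of_le' hc
    · rfl
    · have hnth : (Tape.mk₁ (X :: List.replicate n B)).nth (((k + 1 + 2 : ℕ) : ℤ) - 2) =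
          (List.replicate n B).getI k := by
        rw [show ((k + 1 + 2 : ℕ) : ℤ) - 2 = (k + 1 : ℕ) by omega]
        exact ListBlank.nth_mk _ _
      rw [hnth, List.getI_eq_getElem?_getD, List.getElem?_replicate]
      grind
  · rw [nth_mk₁_eq_default _ (by omega), if_neg (by omega), if_neg (by omega)]

theorem primrec_nth_mk₁_cons_replicate [Inhabited Γ] [Primcodable Γ] (X B : Γ) :
    Primrec fun x : ℕ × ℕ => (Tape.mk₁ (X :: List.replicate x.1 B)).nth ((x.2 : ℤ) - 2) :=
  (Primrec.ite (Primrec.eq.comp snd (.const 2)) (.const X) <|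
    Primrec.ite ((nat_le.comp (.const 3) snd).and
      (nat_le.comp snd (nat_add.comp fst (.const 2)))) (.const B) (.const default)).of_eq
    fun _ => (nth_mk₁_cons_replicate ..).symm

theorem primrecPred_padStep : PrimrecPred fun x : ℕ × ℕ × ℕ => PadStep x.1 x.2.1 x.2.2 := by
  have ha : Primrec fun x : ℕ × ℕ × ℕ => x.2.1 := fst.comp snd
  have hb : Primrec fun x : ℕ × ℕ × ℕ => x.2.2 := snd.comp snd
  exact (Primrec.eq.comp hb (succ.comp ha)).or <| (Primrec.eq.comp hb ha).and <|
    (Primrec.eq.comp ha (.const 1)).or (Primrec.eq.comp ha (nat_add.comp fst (.const 3)))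

theorem primrec_length_cons_replicate {α : Type*} (X B : α) :
    Primrec fun n => (X :: List.replicate n B).length :=
  succ.of_eq fun _ => by simp

variable [Finite Γ] [Finite Λ] [Inhabited Γ] [Inhabited Λ] [Primcodable (TapeCell Γ Λ)]

theorem primrecPred_admissible_haltingPattern [Primcodable Γ] (M : TM0.Machine Γ Λ) (X B : Γ) :
    PrimrecPred fun x : ℕ × ℕ × TapeCell Γ Λ =>
      (haltingPattern M (X :: List.replicate x.1 B)).admissible x.2 := by
  have hcol : Primrec fun x : ℕ × ℕ × TapeCell Γ Λ => x.2.1 := fst.comp snd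
  have hcell : Primrec fun x : ℕ × ℕ × TapeCell Γ Λ => x.2.2 := snd.comp snd
  have hlen : Primrec fun x : ℕ × ℕ × TapeCell Γ Λ => (X :: List.replicate x.1 B).length :=
    (primrec_length_cons_replicate X B).comp fst
  have hinput := (primrec_nth_mk₁_cons_replicate X B).comp (fst.pair hcol)
  have cell (p : TapeCell Γ Λ → Prop) := (primrecPred_of_finite p).comp hcell
  exact (nat_lt.comp hcol (nat_add.comp hlen (.const 5))).and <|
    (primrecPred_imp (cell fun t => t.isInit = true) <| (cell fun t => t.state = default).and
      (Primrec.eq.comp ((dom_finite TapeCell.sym).comp hcell) hinput)).and <|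
    (primrecPred_imp (Primrec.eq.comp hcol (.const 2)) (cell fun t => t.sym = t.head)).and <|
    (primrecPred_imp (Primrec.eq.comp hcol (.const 0))
      (cell fun t => t.sym = default ∧ t.left = default)).and <|
    primrecPred_imp (Primrec.eq.comp hcol (nat_add.comp hlen (.const 4)))
      (cell fun t => t.sym = default ∧ t.right = default)

theorem primrecPred_up_haltingPattern (M : TM0.Machine Γ Λ) (L : ℕ → List Γ) :
    PrimrecPred fun x : ℕ × (ℕ × TapeCell Γ Λ) × ℕ × TapeCell Γ Λ =>
      (haltingPattern M (L x.1)).up x.2.1 x.2.2 := by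
  have hcol : Primrec fun x : ℕ × (ℕ × TapeCell Γ Λ) × ℕ × TapeCell Γ Λ => x.2.1.1 :=
    fst.comp (fst.comp snd)
  have hcol' : Primrec fun x : ℕ × (ℕ × TapeCell Γ Λ) × ℕ × TapeCell Γ Λ => x.2.2.1 :=
    fst.comp (snd.comp snd)
  have hcells : Primrec fun x : ℕ × (ℕ × TapeCell Γ Λ) × ℕ × TapeCell Γ Λ =>
    (x.2.1.2, x.2.2.2) := (snd.comp (fst.comp snd)).pair (snd.comp (snd.comp snd))
  have hstep (isHead : Prop) := (primrecPred_of_finite fun t : TapeCell Γ Λ × TapeCell Γ Λ =>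
    ∃ a, M t.1.state t.1.head = some (t.2.state, a) ∧ t.2.sym = t.1.nextSym isHead a).comp hcells
  have hhead := Primrec.eq.comp hcol (.const 2)
  refine (((Primrec.eq.comp hcol' hcol).and <|
    (primrecPred_imp hhead (hstep True)).and (primrecPred_imp hhead.not (hstep False)))).of_eq
    fun x => and_congr_right fun _ => ?_
  by_cases h : x.2.1.1 = 2 <;> simp [h]

theorem primrecFamily_haltingPattern [Primcodable Γ] (M : TM0.Machine Γ Λ) (X B : Γ) :
    PrimrecFamily fun n => haltingPattern M (X :: List.replicate n B) where
  admissible := primrecPred_admissible_haltingPattern M X B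
  start := (Primrec.eq.comp (fst.comp snd) (.const 0)).and
    ((primrecPred_of_finite fun t : TapeCell Γ Λ => t.isInit = true).comp (snd.comp snd))
  right := (primrecPred_padStep.comp (((primrec_length_cons_replicate X B).comp fst).pair
      ((fst.comp (fst.comp snd)).pair (fst.comp (snd.comp snd))))).and
    ((primrecPred_of_finite fun t : TapeCell Γ Λ × TapeCell Γ Λ =>
      t.1.isInit = t.2.isInit ∧ t.1.state = t.2.state ∧ t.1.head = t.2.head ∧
        t.1.right = t.2.sym ∧ t.2.left = t.1.sym).comp
      ((snd.comp (fst.comp snd)).pair (snd.comp (snd.comp snd))))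
  rightEnd := Primrec.eq.comp (fst.comp snd)
    (nat_add.comp ((primrec_length_cons_replicate X B).comp fst) (.const 4))
  up := primrecPred_up_haltingPattern M fun n => X :: List.replicate n B
  upEnd := (primrecPred_of_finite fun t : TapeCell Γ Λ => M t.state t.head = none).comp
    (snd.comp snd)
  exists_bound := by
    obtain ⟨N, hN⟩ := exists_forall_encode_lt (TapeCell Γ Λ)
    exact ⟨_, Primrec₂.natPair.comp
      (nat_add.comp (primrec_length_cons_replicate X B) (.const 5)) (.const N),
      fun _ c hc => encode_prod_lt hc.1 (hN c.2)⟩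

end HaltingPatternFamily

/-- A `Primcodable` structure on a finite type. The choice is immaterial: every function on a
finite type is primitive recursive. -/
noncomputable abbrev primcodableOfFinite (α : Type*) [Finite α] : Primcodable α :=
  .ofEquiv (Fin (Nat.card α)) (Finite.equivFin α)

theorem GridPattern.PrimrecFamily.exists_heapEquiv_iff {C : Type*} [Primcodable C] [Inhabited C]
    {P : ℕ → GridPattern C} (hP : PrimrecFamily P) :
    ∃ F F' : ℕ → FinGraph, Primrec (fun n => encodePair (F n) (F' n)) ∧
      ∀ n, HeapEquiv (F n).toPreGraph (F' n).toPreGraph ↔ ¬ ∃ w N τ, (P n).Tiling w N τ := by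
  let := primcodableOfFinite DefectColor
  obtain ⟨F, hF, hFP⟩ := hP.exists_realizes
  obtain ⟨F', hF', hFP'⟩ := (hP.prod (primrecFamily_const defectPattern)).exists_realizes
  exact ⟨F, F', Primrec₂.natPair.comp hF hF',
    fun n => heapEquiv_iff_not_exists_tiling (hFP n) (hFP' n)⟩

theorem exists_encodePair_eq_iff {p : FinGraph → FinGraph → Prop} {G G' : FinGraph} :
    (∃ G₁ G₂, encodePair G G' = encodePair G₁ G₂ ∧ p G₁ G₂) ↔ p G G' := by
  simp only [encodePair, Nat.pair_eq_pair, FinGraph.encode_injective.eq_iff]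
  grind

/-- The equivalence problem for regular graph constraints over the class of
heaps is undecidable: the set of (codes of) pairs `⟨G1, G2⟩` of finite graphs
with `G1 ≈_H G2` is not a computable set of natural numbers. -/
theorem equivalence_over_heaps_undecidable :
    ¬ ComputablePred (fun m : ℕ =>
      ∃ G1 G2 : FinGraph, m = encodePair G1 G2 ∧
        HeapEquiv G1.toPreGraph G2.toPreGraph) := by
  intro hdec
  obtain ⟨Γ, Λ, _, _, _, _, M, X, B, hM⟩ := exists_machine_not_computablePred_dom_eval
  let := primcodableOfFinite Γ
  let := primcodableOfFinite (TapeCell Γ Λ)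
  obtain ⟨F, F', hF, hequiv⟩ := (primrecFamily_haltingPattern M X B).exists_heapEquiv_iff
  have hreduction : (fun n => ¬ (Turing.TM0.eval M (X :: List.replicate n B)).Dom) ≤₀ fun m =>
      ∃ G1 G2 : FinGraph, m = encodePair G1 G2 ∧ HeapEquiv G1.toPreGraph G2.toPreGraph := by
    refine ⟨_, hF.to_comp, fun n => ?_⟩
    beta_reduce
    rw [exists_encodePair_eq_iff, hequiv, exists_tiling_haltingPattern_iff]
  have hnot := ComputablePred.computable_of_manyOneReducible hreduction hdec
  exact hM (hnot.not.of_eq fun n => not_not)
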